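/- At the left endpoint x = a, the symmetric partial sums S_N(a) = ∑_{n=−N}^{N} C_n (f_n(a), g_n(a)) converge as N → ∞ to the vector (1/2)·[[1 − cos 2α, −sin 2α], [−sin 2α, 1 + cos 2α]]·(F₁(a), F₂(a))ᵀ, i.e., to (sin²α·F₁(a) − sin α cos α·F₂(a), −sin α cos α·F₁(a) + cos²α·F₂(a)). -/

import Mathlib

/-- The pair `(f,g)`, continuously differentiable on `[a,b]`, satisfies the
Dirac-type system with parameter `lam`:
`-g' + t g + (p - lam ρ) f = 0` and `f' + t f + (q - lam ρ) g = 0` on `[a,b]`. -/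
def SatisfiesDiracSystem (a b : ℝ) (p q t ρ : ℝ → ℝ) (lam : ℝ) (f g : ℝ → ℝ) : Prop :=
  ∃ f' g' : ℝ → ℝ,
    (∀ x ∈ Set.Icc a b, HasDerivWithinAt f (f' x) (Set.Icc a b) x) ∧
    (∀ x ∈ Set.Icc a b, HasDerivWithinAt g (g' x) (Set.Icc a b) x) ∧
    ContinuousOn f' (Set.Icc a b) ∧ ContinuousOn g' (Set.Icc a b) ∧
    (∀ x ∈ Set.Icc a b, -g' x + t x * g x + (p x - lam * ρ x) * f x = 0) ∧
    (∀ x ∈ Set.Icc a b, f' x + t x * f x + (q x - lam * ρ x) * g x = 0)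

/-- The separated boundary conditions
`f(a) cos α + g(a) sin α = 0` and `f(b) cos β + g(b) sin β = 0`. -/
def DiracBC (a b α β : ℝ) (f g : ℝ → ℝ) : Prop :=
  f a * Real.cos α + g a * Real.sin α = 0 ∧
  f b * Real.cos β + g b * Real.sin β = 0

/-- `lam` is an eigenvalue of the Dirac-type boundary-value problem. -/
def IsDiracEigenvalue (a b : ℝ) (p q t ρ : ℝ → ℝ) (α β lam : ℝ) : Prop :=
  ∃ f g : ℝ → ℝ,
    SatisfiesDiracSystem a b p q t ρ lam f g ∧
    (∃ x ∈ Set.Icc a b, (f x ≠ 0 ∨ g x ≠ 0)) ∧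
    DiracBC a b α β f g

/-!
Writing the pair as `f + i g`, the Liouville variable `∫ ρ` and a rotation by `α + ∫ (p + q) / 2`
bring the problem to the canonical form `X' = -iλX - k X̄` on `[0, L]`, with left boundary condition
`Re X(0) = 0`. A complex Prüfer phase and one integration by parts give the eigenvalues and
eigenfunctions up to `O(1/|n|)`, so that the eigenfunctions are quadratically close to an explicit
orthonormal basis and are therefore complete.

Completeness yields the expansion of `∫₀ˣ F`. Divided by `x`, its terms are those of the
expansion at `0` times multipliers close to `sinc`, and the terms `n` and `-n` together are
summable, so that Tannery's theorem as `x → 0` identifies the sum at `0` as `i Im F(0)`, which is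
the limit asserted for the original problem.
-/

open Set Filter Topology MeasureTheory
open scoped ComplexConjugate InnerProductSpace

namespace DiracExpansion

section Bari

variable {ι 𝕜 H : Type*} [RCLike 𝕜] [NormedAddCommGroup H] [InnerProductSpace 𝕜 H]

theorem hasSum_norm_inner_sq (e : HilbertBasis ι 𝕜 H) (x : H) :
    HasSum (fun i => ‖⟪e i, x⟫_𝕜‖ ^ 2) (‖x‖ ^ 2) := by
  have h := RCLike.hasSum_re 𝕜 (e.hasSum_inner_mul_inner x x)
  simpa only [inner_mul_symm_re_eq_norm, norm_mul, norm_inner_symm x, ← sq,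
    inner_self_eq_norm_sq] using h

theorem norm_inner_sq_add_tsum_le {y : ι → H} (hy : Orthonormal 𝕜 y) {z : H} (hz : ‖z‖ = 1)
    (hzy : ∀ j, ⟪y j, z⟫_𝕜 = 0) (x : H) :
    ‖⟪x, z⟫_𝕜‖ ^ 2 + ∑' j, ‖⟪x, y j⟫_𝕜‖ ^ 2 ≤ ‖x‖ ^ 2 := by
  have hzz : ⟪z, z⟫_𝕜 = 1 := inner_self_eq_one_of_norm_eq_one hz
  have pythagoras : ‖x‖ ^ 2 = ‖x - ⟪z, x⟫_𝕜 • z‖ ^ 2 + ‖⟪x, z⟫_𝕜‖ ^ 2 := by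
    have horth : ⟪x - ⟪z, x⟫_𝕜 • z, ⟪z, x⟫_𝕜 • z⟫_𝕜 = 0 := by
      rw [inner_smul_right, inner_sub_left, inner_smul_left, hzz, mul_one, inner_conj_symm,
        sub_self, mul_zero]
    have h := norm_add_sq_eq_norm_sq_add_norm_sq_of_inner_eq_zero _ _ horth
    rwa [sub_add_cancel, norm_smul, hz, mul_one, norm_inner_symm z, ← sq, ← sq, ← sq] at h
  have bessel := hy.tsum_inner_products_le (x - ⟪z, x⟫_𝕜 • z)
  simp only [inner_sub_right, inner_smul_right, hzy, mul_zero, sub_zero] at bessel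
  rw [tsum_congr fun j => congrArg (· ^ 2) (norm_inner_symm x (y j))]
  linarith

theorem exists_unit_vector_of_orthogonal_span_ne_bot {y : ι → H}
    (h : (Submodule.span 𝕜 (range y))ᗮ ≠ ⊥) : ∃ z : H, ‖z‖ = 1 ∧ ∀ j, ⟪y j, z⟫_𝕜 = 0 := by
  obtain ⟨z, hz, hne⟩ := Submodule.exists_mem_ne_zero_of_ne_bot h
  exact ⟨(‖z‖ : 𝕜)⁻¹ • z, norm_smul_inv_norm hne, fun j =>
    (Submodule.mem_orthogonal _ _).1 (Submodule.smul_mem _ _ hz) _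
      (Submodule.subset_span (mem_range_self j))⟩

theorem hasSum_tsum_of_hasSum_swap {κ : Type*} {a : ι → κ → ℝ} {c : κ → ℝ}
    (ha : ∀ i j, 0 ≤ a i j) (hcol : ∀ j, HasSum (fun i => a i j) (c j))
    (hc : Summable c) : HasSum (fun i => ∑' j, a i j) (∑' j, c j) := by
  have hsum : Summable (Function.uncurry a) := by
    rw [← (Equiv.prodComm κ ι).summable_iff]
    refine (summable_prod_of_nonneg fun x => ha _ _).2 ⟨fun j => (hcol j).summable, ?_⟩
    simpa only [Function.comp_apply, Equiv.prodComm_apply, Prod.swap_prod_mk,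
      Function.uncurry_apply_pair, (hcol _).tsum_eq] using hc
  have hrows : Summable fun i => ∑' j, a i j := hsum.prod
  rw [← tsum_congr fun j => (hcol j).tsum_eq, hsum.tsum_comm]
  exact hrows.hasSum

/- With `a i j = |⟪e i, y j⟫|²`, Parseval for `e` and Bessel for `y` compute the off-diagonal mass
of `a` along columns and along rows; a unit vector orthogonal to `y` would make the two disagree. -/
theorem orthogonal_span_eq_bot_of_summable {y : ι → H} (hy : Orthonormal 𝕜 y)
    (e : HilbertBasis ι 𝕜 H) (h : Summable fun i => 1 - ‖⟪e i, y i⟫_𝕜‖ ^ 2) :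
    (Submodule.span 𝕜 (range y))ᗮ = ⊥ := by
  classical
  by_contra hne
  obtain ⟨z, hz, hzy⟩ := exists_unit_vector_of_orthogonal_span_ne_bot hne
  set d : ι → ℝ := fun i => ‖⟪e i, y i⟫_𝕜‖ ^ 2
  set off : ι → ι → ℝ := fun i j => if i = j then 0 else ‖⟪e i, y j⟫_𝕜‖ ^ 2
  have off_nonneg (i j : ι) : 0 ≤ off i j := by positivity
  have column (j : ι) : HasSum (fun i => off i j) (1 - d j) := by
    have hoff := (hasSum_norm_inner_sq e (y j)).update j 0
    rw [hy.1 j] at hoff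
    have hupdate : Function.update (fun i => ‖⟪e i, y j⟫_𝕜‖ ^ 2) j 0 = fun i => off i j := by
      ext i; simp only [off, Function.update_apply]
    rwa [hupdate, one_pow, zero_sub, neg_add_eq_sub] at hoff
  have row (i : ι) : ‖⟪e i, z⟫_𝕜‖ ^ 2 + ∑' j, off i j ≤ 1 - d i := by
    have hs : Summable fun j => ‖⟪e i, y j⟫_𝕜‖ ^ 2 := by
      simpa only [norm_inner_symm (e i)] using hy.inner_products_summable (e i)
    have hoff := hs.hasSum.update i 0
    have hupdate : Function.update (fun j => ‖⟪e i, y j⟫_𝕜‖ ^ 2) i 0 = off i := by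
      ext j; simp only [off, Function.update_apply, eq_comm]
    rw [hupdate] at hoff
    have hbessel := norm_inner_sq_add_tsum_le hy hz hzy (e i)
    rw [e.orthonormal.1 i] at hbessel
    rw [hoff.tsum_eq]
    linarith
  have rows := hasSum_tsum_of_hasSum_swap off_nonneg column h
  have hle := hasSum_le row ((hasSum_norm_inner_sq e z).add rows) h.hasSum
  rw [hz] at hle
  linarith

theorem one_sub_inner_sq_le {E : Type*} [NormedAddCommGroup E] [InnerProductSpace ℝ E] {u v : E}
    (hu : ‖u‖ = 1) (hv : ‖v‖ = 1) (c : ℝ) : 1 - ⟪u, v⟫_ℝ ^ 2 ≤ ‖u - c • v‖ ^ 2 := by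
  rw [norm_sub_sq_real, norm_smul, hu, hv, inner_smul_right, mul_one, Real.norm_eq_abs, sq_abs]
  linarith [sq_nonneg (c - ⟪u, v⟫_ℝ)]

end Bari

section SymmetricSums

theorem sum_Icc_neg_eq_sum_range {M : Type*} [AddCommGroup M] (f : ℤ → M) (N : ℕ) :
    ∑ n ∈ Finset.Icc (-(N : ℤ)) N, f n = ∑ n ∈ Finset.range (N + 1), (f n + f (-n)) - f 0 := by
  induction N with
  | zero => simp
  | succ N ih =>
    rw [Finset.sum_range_succ, add_sub_right_comm, ← ih, Nat.cast_succ,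
      Finset.sum_Icc_succ_eq_add_endpoints]
    abel

/- Tannery's theorem applied to the pairs `n, -n`, along which the coefficients `c` nearly cancel
and the multipliers `m i` nearly agree. -/
theorem tendsto_symmetric_sum_of_multipliers {ι : Type*} {l : Filter ι} [l.NeBot] {c : ℤ → ℝ}
    {m : ι → ℤ → ℝ} {s : ι → ℝ} {A K : ℝ} {δ : ℕ → ℝ}
    (hpair : Summable fun n : ℕ => |c n + c (-n)|) (hδ : Summable fun n : ℕ => |c (-n)| * δ n)
    (hbound : ∀ᶠ i in l, ∀ n, |m i n| ≤ K) (heven : ∀ᶠ i in l, ∀ n : ℕ, |m i n - m i (-n)| ≤ δ n)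
    (hlim : ∀ n, Tendsto (m · n) l (𝓝 1)) (hsum : ∀ᶠ i in l, HasSum (fun n => c n * m i n) (s i))
    (hs : Tendsto s l (𝓝 A)) :
    Tendsto (fun N : ℕ => ∑ n ∈ Finset.Icc (-(N : ℤ)) N, c n) atTop (𝓝 A) := by
  have tannery : Tendsto (fun i => ∑' n : ℕ, (c n * m i n + c (-n) * m i (-n))) l
      (𝓝 (∑' n : ℕ, (c n + c (-n)))) := by
    refine tendsto_tsum_of_dominated_convergence ((hpair.mul_left K).add hδ) (fun n => ?_) ?_
    · simpa using ((hlim n).const_mul (c n)).add ((hlim (-n)).const_mul (c (-n)))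
    · filter_upwards [hbound, heven] with i hi hi' n
      calc ‖c n * m i n + c (-n) * m i (-n)‖
          = |m i n * (c n + c (-n)) - c (-n) * (m i n - m i (-n))| := by
            rw [Real.norm_eq_abs]; ring_nf
        _ ≤ |m i n| * |c n + c (-n)| + |c (-n)| * |m i n - m i (-n)| := by
            simpa only [abs_mul] using
              abs_sub (m i n * (c n + c (-n))) (c (-n) * (m i n - m i (-n)))
        _ ≤ _ := by gcongr; exacts [hi n, hi' n]
  have regularized : Tendsto (fun i => ∑' n : ℕ, (c n * m i n + c (-n) * m i (-n))) l
      (𝓝 (A + c 0)) := by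
    have hadd : Tendsto (fun i => s i + c 0 * m i 0) l (𝓝 (A + c 0 * 1)) :=
      hs.add ((hlim 0).const_mul _)
    rw [mul_one] at hadd
    exact hadd.congr' (hsum.mono fun i hi => hi.nat_add_neg.tsum_eq.symm)
  have hpartial : Tendsto (fun N : ℕ => ∑ n ∈ Finset.range (N + 1), (c n + c (-n))) atTop
      (𝓝 (A + c 0)) := by
    rw [← tendsto_nhds_unique tannery regularized]
    exact hpair.of_abs.hasSum.tendsto_sum_nat.comp (tendsto_add_atTop_nat 1)
  simpa only [sum_Icc_neg_eq_sum_range, add_sub_cancel_right] using hpartial.sub_const (c 0)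

end SymmetricSums

section Phase

open Complex (I exp)

theorem exists_hasDerivWithinAt_Icc_of_lipschitzWith {E : Type*} [NormedAddCommGroup E]
    [NormedSpace ℝ E] [CompleteSpace E] {v : ℝ → E → E} {t₀ t₁ C : ℝ} {K : NNReal}
    (hv : ∀ t ∈ Icc t₀ t₁, LipschitzWith K (v t)) (hcont : ∀ x, ContinuousOn (v · x) (Icc t₀ t₁))
    (hC : ∀ t ∈ Icc t₀ t₁, ∀ x, ‖v t x‖ ≤ C) (t : Icc t₀ t₁) (x : E) :
    ∃ γ : ℝ → E, γ t = x ∧ ∀ s ∈ Icc t₀ t₁, HasDerivWithinAt γ (v s (γ s)) (Icc t₀ t₁) s := by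
  have hC' (s : ℝ) (hs : s ∈ Icc t₀ t₁) (y : E) : ‖v s y‖ ≤ C.toNNReal :=
    (hC s hs y).trans (Real.le_coe_toNNReal C)
  have picard : IsPicardLindelof v t x
      (C.toNNReal * (max (t₁ - t) (t - t₀)).toNNReal) 0 C.toNNReal K :=
    { lipschitzOnWith := fun s hs => (hv s hs).lipschitzOnWith
      continuousOn := fun y _ => hcont y
      norm_le := fun s hs y _ => hC' s hs y
      mul_max_le := by
        rw [NNReal.coe_zero, sub_zero, NNReal.coe_mul]
        gcongr
        exact Real.le_coe_toNNReal _ }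
  exact picard.exists_eq_forall_mem_Icc_hasDerivWithinAt₀

theorem norm_exp_ofReal_mul_I_sub_le (x y : ℝ) : ‖exp (x * I) - exp (y * I)‖ ≤ |x - y| := by
  have h : exp (x * I) - exp (y * I) = exp (y * I) * (exp (I * (x - y : ℝ)) - 1) := by
    rw [mul_sub, mul_one, ← Complex.exp_add]
    push_cast
    ring_nf
  rw [h, norm_mul, Complex.norm_exp_ofReal_mul_I, one_mul]
  exact Real.norm_exp_I_mul_ofReal_sub_one_le

theorem exists_pos_norm_le_Icc {E : Type*} [NormedAddCommGroup E] {f : ℝ → E} {x y : ℝ}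
    (hf : ContinuousOn f (Icc x y)) : ∃ K > 0, ∀ s ∈ Icc x y, ‖f s‖ ≤ K := by
  obtain ⟨K, hK⟩ := isCompact_Icc.exists_bound_of_continuousOn hf
  exact ⟨max K 1, by positivity, fun s hs => (hK s hs).trans (le_max_left _ _)⟩

/-- `X = f + i g` solves the canonical Dirac system `X' = -iλX - k X̄` on `[0, L]`, to which the
system `-g' + t g + (p - λρ) f = 0`, `f' + t f + (q - λρ) g = 0` reduces by a change of variable
and a gauge transformation. -/
def IsSolution (L : ℝ) (k : ℝ → ℂ) (lam : ℝ) (X : ℝ → ℂ) : Prop :=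
  ∀ s ∈ Icc 0 L, HasDerivWithinAt X (-(lam * I) * X s - k s * conj (X s)) (Icc 0 L) s

/-- The vector field driving the complex Prüfer phase `Z` of a solution `X = i exp Z`. -/
noncomputable def phaseField (k : ℝ → ℂ) (lam s : ℝ) (z : ℂ) : ℂ :=
  -(lam * I) + k s * exp ((-2 * z.im : ℝ) * I)

/-- `Z` is the complex Prüfer phase of the solution `i exp Z` starting from `i` at `0`: its real
part is the logarithm of the modulus, and its imaginary part the Prüfer angle. -/
structure IsPhase (L : ℝ) (k : ℝ → ℂ) (lam : ℝ) (Z : ℝ → ℂ) : Prop where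
  map_zero : Z 0 = 0
  hasDerivAt : ∀ s ∈ Icc 0 L, HasDerivAt Z (phaseField k lam s (Z s)) s

variable {L lam : ℝ} {k Z : ℝ → ℂ}

theorem lipschitzWith_phaseField {K : NNReal} {s : ℝ} (hK : ‖k s‖ ≤ K) :
    LipschitzWith (K * 2) (phaseField k lam s) := by
  refine LipschitzWith.of_dist_le_mul fun z w => ?_
  have him : |-2 * z.im - -2 * w.im| ≤ 2 * dist z w := by
    rw [← mul_sub, abs_mul, abs_neg, abs_two, dist_eq_norm, ← Complex.sub_im]
    gcongr
    exact Complex.abs_im_le_norm _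
  calc dist (phaseField k lam s z) (phaseField k lam s w)
      = ‖k s‖ * ‖exp ((-2 * z.im : ℝ) * I) - exp ((-2 * w.im : ℝ) * I)‖ := by
        rw [phaseField, phaseField, dist_add_left, dist_eq_norm, ← mul_sub, norm_mul]
    _ ≤ K * (2 * dist z w) := by
        gcongr
        exact (norm_exp_ofReal_mul_I_sub_le _ _).trans him
    _ = (K * 2 : NNReal) * dist z w := by push_cast; ring

theorem norm_phaseField_le {K s : ℝ} (hK : ‖k s‖ ≤ K) (z : ℂ) :
    ‖phaseField k lam s z‖ ≤ |lam| + K := by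
  refine (norm_add_le _ _).trans (add_le_add ?_ ?_)
  · simp
  · simpa only [norm_mul, Complex.norm_exp_ofReal_mul_I, mul_one]

theorem exists_isPhase (hL : 0 ≤ L) (hk : Continuous k) (lam : ℝ) : ∃ Z, IsPhase L k lam Z := by
  obtain ⟨K, hK0, hK⟩ := exists_pos_norm_le_Icc (hk.continuousOn (s := Icc (-1) (L + 1)))
  lift K to NNReal using hK0.le
  obtain ⟨Z, hZ0, hZ⟩ := exists_hasDerivWithinAt_Icc_of_lipschitzWith (v := phaseField k lam)
    (fun s hs => lipschitzWith_phaseField (hK s hs))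
    (fun z => by unfold phaseField; fun_prop) (fun s hs => norm_phaseField_le (hK s hs))
    ⟨0, by linarith, by linarith⟩ 0
  exact ⟨Z, hZ0, fun s hs => (hZ s ⟨by linarith [hs.1], by linarith [hs.2]⟩).hasDerivAt
    (Icc_mem_nhds (by linarith [hs.1]) (by linarith [hs.2]))⟩

/-- The unimodular factor `exp (-2 i Im Z)`, through which the potential `k` enters the equation for
the phase. -/
noncomputable def phaseFactor (Z : ℝ → ℂ) (s : ℝ) : ℂ := exp ((-2 * (Z s).im : ℝ) * I)

theorem norm_phaseFactor (Z : ℝ → ℂ) (s : ℝ) : ‖phaseFactor Z s‖ = 1 :=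
  Complex.norm_exp_ofReal_mul_I _

namespace IsPhase

theorem continuousOn (hZ : IsPhase L k lam Z) : ContinuousOn Z (Icc 0 L) :=
  HasDerivAt.continuousOn hZ.hasDerivAt

theorem isSolution (hZ : IsPhase L k lam Z) : IsSolution L k lam fun s => I * exp (Z s) := by
  intro s hs
  refine ((hZ.hasDerivAt s hs).cexp.const_mul I).hasDerivWithinAt.congr_deriv ?_
  have hconj : exp (Z s) * exp ((-2 * (Z s).im : ℝ) * I) = exp (conj (Z s)) := by
    rw [← Complex.exp_add]
    congr 1
    apply Complex.ext
    · simp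
    · simp; ring
  rw [phaseField, map_mul, Complex.conj_I, ← Complex.exp_conj, ← hconj]
  ring

theorem hasDerivAt_im (hZ : IsPhase L k lam Z) {s : ℝ} (hs : s ∈ Icc 0 L) :
    HasDerivAt (fun s => (Z s).im) (-lam + (k s * phaseFactor Z s).im) s := by
  have h := Complex.imCLM.hasFDerivAt.comp_hasDerivAt s (hZ.hasDerivAt s hs)
  refine h.congr_deriv ?_
  rw [phaseField, phaseFactor, Complex.imCLM_apply, Complex.add_im, Complex.neg_im,
    Complex.im_ofReal_mul, Complex.I_im, mul_one]

theorem hasDerivAt_phaseFactor (hZ : IsPhase L k lam Z) {s : ℝ} (hs : s ∈ Icc 0 L) :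
    HasDerivAt (phaseFactor Z)
      (2 * I * ((lam - (k s * phaseFactor Z s).im) * phaseFactor Z s)) s := by
  refine (((hZ.hasDerivAt_im hs).const_mul (-2)).ofReal_comp.mul_const I).cexp.congr_deriv ?_
  rw [phaseFactor]
  push_cast
  ring

theorem continuousOn_phaseFactor (hZ : IsPhase L k lam Z) :
    ContinuousOn (phaseFactor Z) (Icc 0 L) :=
  HasDerivAt.continuousOn fun _ => hZ.hasDerivAt_phaseFactor

theorem add_mul_I_eq_integral (hZ : IsPhase L k lam Z) (hk : Continuous k) {x : ℝ}
    (hx : x ∈ Icc 0 L) :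
    Z x + (lam * x : ℝ) * I = ∫ s in 0..x, k s * phaseFactor Z s := by
  have hsub : uIcc 0 x ⊆ Icc 0 L := uIcc_of_le hx.1 ▸ Icc_subset_Icc_right hx.2
  have hint : IntervalIntegrable (fun s => k s * phaseFactor Z s) volume 0 x :=
    (hk.continuousOn.mul (hZ.continuousOn_phaseFactor.mono hsub)).intervalIntegrable
  have ftc := intervalIntegral.integral_eq_sub_of_hasDerivAt
    (fun s hs => hZ.hasDerivAt s (hsub hs))
    (IntervalIntegrable.add (f := fun _ => -(lam * I)) intervalIntegrable_const hint)
  change ∫ s in 0..x, (-(lam * I) + k s * phaseFactor Z s) = Z x - Z 0 at ftc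
  rw [intervalIntegral.integral_add intervalIntegrable_const hint, intervalIntegral.integral_const,
    hZ.map_zero, sub_zero, sub_zero, Complex.real_smul] at ftc
  rw [← sub_eq_iff_eq_add'.2 ftc.symm]
  push_cast
  ring

/- The Prüfer angle rotates with speed about `-λ`, so integrating `exp (-2 i Im Z)` by parts gains
a factor `1 / λ`. -/
theorem two_mul_integral_phaseFactor (hZ : IsPhase L k lam Z) (hk : ContDiff ℝ 1 k) {x : ℝ}
    (hx : x ∈ Icc 0 L) :
    2 * I * lam * ∫ s in 0..x, k s * phaseFactor Z s =
      k x * phaseFactor Z x - k 0 -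
        ∫ s in 0..x, (deriv k s - 2 * I * (k s * (k s * phaseFactor Z s).im)) *
          phaseFactor Z s := by
  have hsub : uIcc 0 x ⊆ Icc 0 L := uIcc_of_le hx.1 ▸ Icc_subset_Icc_right hx.2
  have hu : ContinuousOn (phaseFactor Z) (uIcc 0 x) := hZ.continuousOn_phaseFactor.mono hsub
  have hk' : Continuous (deriv k) := hk.continuous_deriv_one
  have hkc := hk.continuous
  have him : ContinuousOn (fun s => ((k s * phaseFactor Z s).im : ℂ)) (uIcc 0 x) :=
    Complex.continuous_ofReal.comp_continuousOn
      (Complex.continuous_im.comp_continuousOn (hkc.continuousOn.mul hu))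
  have factor_zero : phaseFactor Z 0 = 1 := by simp [phaseFactor, hZ.map_zero]
  have parts := intervalIntegral.integral_mul_deriv_eq_deriv_mul
    (fun s _ => (hk.differentiable_one s).hasDerivAt)
    (fun s hs => hZ.hasDerivAt_phaseFactor (hsub hs)) (hk'.intervalIntegrable _ _)
    (ContinuousOn.intervalIntegrable (by fun_prop))
  rw [factor_zero, mul_one, eq_sub_iff_add_eq, ← intervalIntegral.integral_add
    (ContinuousOn.intervalIntegrable (by fun_prop))
    (ContinuousOn.intervalIntegrable (by fun_prop))] at parts
  rw [← parts, eq_sub_iff_add_eq, ← intervalIntegral.integral_const_mul,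
    ← intervalIntegral.integral_add (ContinuousOn.intervalIntegrable (by fun_prop))
    (ContinuousOn.intervalIntegrable (by fun_prop))]
  congr 1 with s
  ring

theorem norm_integral_phaseFactor_le (hZ : IsPhase L k lam Z) (hk : ContDiff ℝ 1 k) {K K' : ℝ}
    (hK : ∀ s ∈ Icc 0 L, ‖k s‖ ≤ K) (hK' : ∀ s ∈ Icc 0 L, ‖deriv k s‖ ≤ K') {x : ℝ}
    (hx : x ∈ Icc 0 L) :
    2 * |lam| * ‖∫ s in 0..x, k s * phaseFactor Z s‖ ≤ K + K + (K' + 2 * (K * K)) * |x - 0| := by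
  have hkf (s : ℝ) (hs : s ∈ Icc 0 L) : ‖k s * phaseFactor Z s‖ ≤ K := by
    simpa only [norm_mul, norm_phaseFactor, mul_one] using hK s hs
  have remainder : ‖∫ s in 0..x, (deriv k s - 2 * I * (k s * (k s * phaseFactor Z s).im)) *
      phaseFactor Z s‖ ≤ (K' + 2 * (K * K)) * |x - 0| := by
    refine intervalIntegral.norm_integral_le_of_norm_le_const fun s hs => ?_
    rw [uIoc_of_le hx.1] at hs
    have hs' : s ∈ Icc 0 L := ⟨hs.1.le, hs.2.trans hx.2⟩
    have him := (Complex.abs_im_le_norm _).trans (hkf s hs')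
    rw [norm_mul, norm_phaseFactor, mul_one]
    refine (norm_sub_le _ _).trans ?_
    rw [norm_mul, norm_mul, norm_mul, Complex.norm_two, Complex.norm_I, Complex.norm_real,
      mul_one, Real.norm_eq_abs]
    gcongr
    exacts [hK' s hs', (norm_nonneg _).trans (hK s hs'), hK s hs']
  have h := congrArg norm (hZ.two_mul_integral_phaseFactor hk hx)
  rw [norm_mul, norm_mul, norm_mul, Complex.norm_two, Complex.norm_I, Complex.norm_real,
    Real.norm_eq_abs, mul_one] at h
  rw [h]
  refine (norm_sub_le _ _).trans (add_le_add ((norm_sub_le _ _).trans ?_) remainder)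
  exact add_le_add (hkf x hx) (hK 0 ⟨le_rfl, hx.1.trans hx.2⟩)

end IsPhase

theorem exists_norm_phase_add_le (hL : 0 ≤ L) (hk : ContDiff ℝ 1 k) :
    ∃ M > 0, ∀ lam Z, IsPhase L k lam Z → ∀ s ∈ Icc 0 L,
      ‖Z s + (lam * s : ℝ) * I‖ ≤ M / (1 + |lam|) := by
  obtain ⟨K, hK0, hK⟩ := exists_pos_norm_le_Icc (hk.continuous.continuousOn (s := Icc 0 L))
  obtain ⟨K', hK'0, hK'⟩ :=
    exists_pos_norm_le_Icc (hk.continuous_deriv_one.continuousOn (s := Icc 0 L))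
  refine ⟨K * L + (K + K + (K' + 2 * (K * K)) * L), by positivity, fun lam Z hZ x hx => ?_⟩
  have habs : |x - 0| ≤ L := by rw [sub_zero, abs_of_nonneg hx.1]; exact hx.2
  rw [hZ.add_mul_I_eq_integral hk.continuous hx, le_div_iff₀ (by positivity), mul_comm, add_mul,
    one_mul]
  have slow : ‖∫ s in 0..x, k s * phaseFactor Z s‖ ≤ K * |x - 0| := by
    refine intervalIntegral.norm_integral_le_of_norm_le_const fun s hs => ?_
    rw [uIoc_of_le hx.1] at hs
    rw [norm_mul, norm_phaseFactor, mul_one]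
    exact hK s ⟨hs.1.le, hs.2.trans hx.2⟩
  have fast := hZ.norm_integral_phaseFactor_le hk hK hK' hx
  have hfast : |lam| * ‖∫ s in 0..x, k s * phaseFactor Z s‖ ≤
      K + K + (K' + 2 * (K * K)) * |x - 0| :=
    (mul_le_mul_of_nonneg_right (by linarith [abs_nonneg lam]) (norm_nonneg _)).trans fast
  refine add_le_add (slow.trans (by gcongr)) (hfast.trans (by gcongr))

end Phase

section Spectrum

open Complex (I exp)

variable {L lam μ : ℝ} {k Z W X : ℝ → ℂ}

theorem deriv_nonneg_of_eventually_le_left {d : ℝ → ℝ} {d' x : ℝ} (hd : HasDerivAt d d' x)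
    (h : ∀ᶠ s in 𝓝[<] x, d s ≤ d x) : 0 ≤ d' := by
  have hslope := (hasDerivWithinAt_iff_tendsto_slope' self_notMem_Iio).1
    (hd.hasDerivWithinAt (s := Iio x))
  refine ge_of_tendsto hslope ?_
  filter_upwards [h, self_mem_nhdsWithin] with s hs hsx
  rw [slope_def_field]
  exact div_nonneg_of_nonpos (sub_nonpos.2 hs) (sub_nonpos.2 (le_of_lt hsx))

namespace IsPhase

theorem im_le_im (hZ : IsPhase L k lam Z) (hW : IsPhase L k μ W) (h : lam < μ) {x : ℝ}
    (hx : x ∈ Icc 0 L) : (W x).im ≤ (Z x).im := by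
  refine image_le_of_deriv_right_lt_deriv_boundary'
    (Complex.continuous_im.comp_continuousOn hW.continuousOn)
    (fun s hs => (hW.hasDerivAt_im (Ico_subset_Icc_self hs)).hasDerivWithinAt)
    (by rw [Function.comp_apply, Function.comp_apply, hW.map_zero, hZ.map_zero])
    (Complex.continuous_im.comp_continuousOn hZ.continuousOn)
    (fun s hs => (hZ.hasDerivAt_im (Ico_subset_Icc_self hs)).hasDerivWithinAt)
    (fun s _ (heq : (W s).im = (Z s).im) => ?_) hx
  rw [phaseFactor, phaseFactor, heq]
  linarith

theorem im_lt_im (hZ : IsPhase L k lam Z) (hW : IsPhase L k μ W) (h : lam < μ) (hL : 0 < L) :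
    (W L).im < (Z L).im := by
  have hLL : L ∈ Icc 0 L := right_mem_Icc.2 hL.le
  refine (hZ.im_le_im hW h hLL).lt_of_ne fun heq => ?_
  have hd := deriv_nonneg_of_eventually_le_left ((hW.hasDerivAt_im hLL).sub (hZ.hasDerivAt_im hLL))
    (by
      filter_upwards [Ioo_mem_nhdsLT hL] with s hs
      simpa [heq] using hZ.im_le_im hW h (Ioo_subset_Icc_self hs))
  rw [phaseFactor, phaseFactor, heq] at hd
  linarith

end IsPhase

theorem exists_dist_phase_le (hL : 0 ≤ L) (hk : Continuous k) :
    ∃ C, ∀ lam μ Z W, IsPhase L k lam Z → IsPhase L k μ W →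
      dist (Z L) (W L) ≤ C * |lam - μ| := by
  obtain ⟨K, hK0, hK⟩ := exists_pos_norm_le_Icc (hk.continuousOn (s := Icc 0 L))
  lift K to NNReal using hK0.le
  refine ⟨(Real.exp ((K * 2 : NNReal) * L) - 1) / (K * 2 : NNReal), fun lam μ Z W hZ hW => ?_⟩
  have hne : ((K * 2 : NNReal) : ℝ) ≠ 0 := by push_cast; positivity
  have gronwall := dist_le_of_approx_trajectories_ODE_of_mem (v := phaseField k lam)
    (s := fun _ => univ) (εf := 0) (εg := |lam - μ|) (δ := 0)
    (fun s hs => (lipschitzWith_phaseField (hK s (Ico_subset_Icc_self hs))).lipschitzOnWith)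
    hZ.continuousOn (fun s hs => (hZ.hasDerivAt s (Ico_subset_Icc_self hs)).hasDerivWithinAt)
    (fun s _ => (dist_self _).le) (fun _ _ => mem_univ _)
    hW.continuousOn (fun s hs => (hW.hasDerivAt s (Ico_subset_Icc_self hs)).hasDerivWithinAt)
    (fun s _ => by
      rw [phaseField, phaseField, dist_add_right, dist_neg_neg, dist_comm, dist_eq_norm, ← sub_mul,
        norm_mul, Complex.norm_I, mul_one, ← Complex.ofReal_sub, Complex.norm_real,
        Real.norm_eq_abs])
    (fun _ _ => mem_univ _) (by rw [hZ.map_zero, hW.map_zero, dist_self])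
    L (right_mem_Icc.2 hL)
  simp only [gronwallBound_of_K_ne_0 hne, zero_mul, zero_add, sub_zero] at gronwall
  rwa [div_mul_comm]

/-- A choice of complex Prüfer phases for all spectral parameters. -/
def IsPhaseFamily (L : ℝ) (k : ℝ → ℂ) (Z : ℝ → ℝ → ℂ) : Prop := ∀ lam, IsPhase L k lam (Z lam)

namespace IsPhaseFamily

variable {Z : ℝ → ℝ → ℂ}

theorem strictAnti_im (hZ : IsPhaseFamily L k Z) (hL : 0 < L) :
    StrictAnti fun lam => (Z lam L).im :=
  fun lam μ h => (hZ lam).im_lt_im (hZ μ) h hL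

theorem surjective_im (hZ : IsPhaseFamily L k Z) (hL : 0 < L) (hk : ContDiff ℝ 1 k) :
    Function.Surjective fun lam => (Z lam L).im := by
  obtain ⟨C, hC⟩ := exists_dist_phase_le hL.le hk.continuous
  obtain ⟨M, hM0, hM⟩ := exists_norm_phase_add_le hL.le hk
  have hcont : Continuous fun lam => (Z lam L).im := Complex.continuous_im.comp
    (LipschitzWith.of_dist_le' fun lam μ => hC lam μ _ _ (hZ lam) (hZ μ)).continuous
  have near (lam : ℝ) : |(Z lam L).im + lam * L| ≤ M := by
    have h := (Complex.abs_im_le_norm _).trans (hM lam _ (hZ lam) L (right_mem_Icc.2 hL.le))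
    rw [Complex.add_im, Complex.im_ofReal_mul, Complex.I_im, mul_one] at h
    exact h.trans (div_le_self hM0.le (by linarith [abs_nonneg lam]))
  refine hcont.surjective' ?_ ?_
  · refine tendsto_atTop_mono (fun lam => ?_)
      (tendsto_atTop_add_const_right atBot (-M) (tendsto_neg_atBot_atTop.atTop_mul_const hL))
    linarith [(abs_le.1 (near lam)).1]
  · refine tendsto_atBot_mono (fun lam => ?_)
      (tendsto_atBot_add_const_right atTop M (tendsto_neg_atTop_atBot.atBot_mul_const hL))
    linarith [(abs_le.1 (near lam)).2]

end IsPhaseFamily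

theorem lipschitzWith_canonicalField {K : NNReal} {s : ℝ} (hK : ‖k s‖ ≤ K) :
    LipschitzWith (‖lam‖₊ + K) fun z : ℂ => -(lam * I) * z - k s * conj z := by
  refine LipschitzWith.of_dist_le_mul fun z w => ?_
  have h : -(lam * I) * z - k s * conj z - (-(lam * I) * w - k s * conj w) =
      -(lam * I) * (z - w) - k s * conj (z - w) := by
    rw [map_sub]
    ring
  rw [dist_eq_norm, dist_eq_norm, h, NNReal.coe_add, coe_nnnorm, add_mul]
  refine (norm_sub_le _ _).trans (add_le_add ?_ ?_)
  · simp
  · rw [norm_mul, Complex.norm_conj]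
    gcongr

namespace IsSolution

theorem continuousOn (hX : IsSolution L k lam X) : ContinuousOn X (Icc 0 L) :=
  fun s hs => (hX s hs).continuousWithinAt

theorem smul (hX : IsSolution L k lam X) (r : ℝ) : IsSolution L k lam (r • X) := by
  intro s hs
  refine ((hX s hs).const_smul r).congr_deriv ?_
  rw [Pi.smul_apply, Complex.real_smul, Complex.real_smul, map_mul, Complex.conj_ofReal]
  ring

theorem eqOn_of_zero_eq {Y : ℝ → ℂ} (hk : ContinuousOn k (Icc 0 L)) (hX : IsSolution L k lam X)
    (hY : IsSolution L k lam Y) (h : X 0 = Y 0) : EqOn X Y (Icc 0 L) := by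
  obtain ⟨K, hK0, hK⟩ := exists_pos_norm_le_Icc hk
  lift K to NNReal using hK0.le
  have right_deriv {U : ℝ → ℂ} (hU : IsSolution L k lam U) (s : ℝ) (hs : s ∈ Ico 0 L) :
      HasDerivWithinAt U (-(lam * I) * U s - k s * conj (U s)) (Ici s) s :=
    (hU s (Ico_subset_Icc_self hs)).mono_of_mem_nhdsWithin (Icc_mem_nhdsGE_of_mem hs)
  exact ODE_solution_unique_of_mem_Icc_right (v := fun s z => -(lam * I) * z - k s * conj z)
    (s := fun _ => univ)
    (fun s hs => (lipschitzWith_canonicalField (hK s (Ico_subset_Icc_self hs))).lipschitzOnWith)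
    hX.continuousOn (right_deriv hX) (fun _ _ => mem_univ _)
    hY.continuousOn (right_deriv hY) (fun _ _ => mem_univ _) h

theorem eq_smul_exp_phase (hk : ContinuousOn k (Icc 0 L)) (hX : IsSolution L k lam X)
    (h0 : (X 0).re = 0) (hZ : IsPhase L k lam Z) :
    EqOn X (fun s => (X 0).im • (I * exp (Z s))) (Icc 0 L) := by
  refine hX.eqOn_of_zero_eq hk (hZ.isSolution.smul (X 0).im) ?_
  apply Complex.ext <;> simp [hZ.map_zero, h0]

end IsSolution

theorem re_mul_exp_phase_eq_zero_iff (z : ℂ) (γ : ℝ) :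
    (I * exp z * exp (-(γ * I))).re = 0 ↔ ∃ m : ℤ, z.im = γ + m * Real.pi := by
  have h : (I * exp z * exp (-(γ * I))).re = -(Real.exp z.re * Real.sin (z.im - γ)) := by
    rw [mul_assoc, ← Complex.exp_add, Complex.I_mul_re, Complex.exp_im]
    simp [sub_eq_add_neg]
  rw [h, neg_eq_zero, mul_eq_zero_iff_left (Real.exp_ne_zero _), Real.sin_eq_zero_iff]
  exact exists_congr fun m => by rw [eq_sub_iff_add_eq', eq_comm]

end Spectrum

section Eigenbasis

open Complex (I exp)

/-- `X` is an eigenfunction of the canonical Dirac problem on `[0, L]` with `Re X(0) = 0` and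
`Re (e^{-iγ} X(L)) = 0`. By uniqueness, `X` is nontrivial exactly when `X(0) ≠ 0`. -/
structure IsEigenfunction (L : ℝ) (k : ℝ → ℂ) (γ lam : ℝ) (X : ℝ → ℂ) : Prop where
  isSolution : IsSolution L k lam X
  left : (X 0).re = 0
  right : (X L * exp (-(γ * I))).re = 0
  ne_zero : X 0 ≠ 0

/-- The `y n` form an orthonormal system of eigenfunctions for the nondecreasing list `lam` of all
eigenvalues of the canonical Dirac problem. -/
structure IsEigenbasis (L : ℝ) (k : ℝ → ℂ) (γ : ℝ) (lam : ℤ → ℝ) (y : ℤ → ℝ → ℂ) : Prop where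
  isEigenfunction : ∀ n, IsEigenfunction L k γ (lam n) (y n)
  monotone : Monotone lam
  orthonormal : ∀ m n, ∫ s in 0..L, ⟪y m s, y n s⟫_ℝ = if m = n then 1 else 0
  exhaustive : ∀ μ X, IsEigenfunction L k γ μ X → μ ∈ range lam

variable {L γ μ : ℝ} {k : ℝ → ℂ} {Z X : ℝ → ℂ} {lam : ℤ → ℝ} {y : ℤ → ℝ → ℂ}

theorem IsEigenfunction.im_ne_zero (hX : IsEigenfunction L k γ μ X) : (X 0).im ≠ 0 :=
  fun h => hX.ne_zero (Complex.ext hX.left h)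

theorem IsEigenfunction.exists_im_phase_eq (hX : IsEigenfunction L k γ μ X) (hL : 0 ≤ L)
    (hk : ContinuousOn k (Icc 0 L)) (hZ : IsPhase L k μ Z) :
    ∃ m : ℤ, (Z L).im = γ + m * Real.pi := by
  have h := hX.right
  rw [hX.isSolution.eq_smul_exp_phase hk hX.left hZ (right_mem_Icc.2 hL), smul_mul_assoc,
    Complex.smul_re, smul_eq_mul, mul_eq_zero_iff_left hX.im_ne_zero] at h
  exact (re_mul_exp_phase_eq_zero_iff _ _).1 h

theorem IsPhase.isEigenfunction (hZ : IsPhase L k μ Z) {m : ℤ} (h : (Z L).im = γ + m * Real.pi) :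
    IsEigenfunction L k γ μ fun s => I * exp (Z s) where
  isSolution := hZ.isSolution
  left := by simp [hZ.map_zero]
  right := (re_mul_exp_phase_eq_zero_iff _ _).2 ⟨m, h⟩
  ne_zero := by simp [hZ.map_zero]

theorem exists_eq_add_of_strictMono_of_surjective {j : ℤ → ℤ} (hmono : StrictMono j)
    (hsurj : Function.Surjective j) : ∃ j₀, ∀ n, j n = n + j₀ := by
  have succ (n : ℤ) : j (n + 1) = j n + 1 :=
    (StrictMono.orderIsoOfSurjective j hmono hsurj).map_succ n
  refine ⟨j 0, fun n => ?_⟩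
  induction n using Int.induction_on with
  | zero => rw [zero_add]
  | succ n ih => rw [succ, ih]; ring
  | pred n ih =>
    have h := succ (-n - 1)
    rw [sub_add_cancel, ih] at h
    lia

namespace IsEigenbasis

theorem injective (h : IsEigenbasis L k γ lam y) (hL : 0 ≤ L) (hk : ContinuousOn k (Icc 0 L)) :
    Function.Injective lam := by
  intro m n hmn
  by_contra hne
  have hm := h.isEigenfunction m
  have hn := h.isEigenfunction n
  set r : ℝ := (y m 0).im / (y n 0).im
  have proportional : EqOn (y m) (r • y n) (Icc 0 L) := by
    refine hm.isSolution.eqOn_of_zero_eq hk (hmn ▸ hn.isSolution.smul r) (Complex.ext ?_ ?_)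
    · simp [hm.left, hn.left]
    · simp [r, hn.im_ne_zero]
  have hzero : ∫ s in 0..L, ⟪y m s, y n s⟫_ℝ = r * ∫ s in 0..L, ⟪y n s, y n s⟫_ℝ := by
    rw [← intervalIntegral.integral_const_mul]
    refine intervalIntegral.integral_congr fun s hs => ?_
    rw [uIcc_of_le hL] at hs
    simp only [proportional hs, Pi.smul_apply, real_inner_smul_left]
  rw [h.orthonormal, h.orthonormal, if_neg hne, if_pos rfl, mul_one] at hzero
  exact div_ne_zero hm.im_ne_zero hn.im_ne_zero hzero.symm

theorem exists_im_phase_eq (h : IsEigenbasis L k γ lam y) (hL : 0 < L) (hk : ContDiff ℝ 1 k)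
    {Z : ℝ → ℝ → ℂ} (hZ : IsPhaseFamily L k Z) :
    ∃ κ : ℝ, ∀ n, (Z (lam n) L).im = -(Real.pi * n + κ) := by
  have hkc := hk.continuous.continuousOn (s := Icc 0 L)
  choose m hm using fun n => (h.isEigenfunction n).exists_im_phase_eq hL.le hkc (hZ (lam n))
  have hmono : StrictMono fun n => -m n := by
    intro n n' hn
    have hlt : (Z (lam n') L).im < (Z (lam n) L).im :=
      hZ.strictAnti_im hL ((h.monotone.strictMono_of_injective (h.injective hL.le hkc)) hn)
    rw [hm, hm, add_lt_add_iff_left, mul_lt_mul_iff_left₀ Real.pi_pos, Int.cast_lt] at hlt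
    exact neg_lt_neg hlt
  have hsurj : Function.Surjective fun n => -m n := by
    intro i
    obtain ⟨μ, hμ⟩ := hZ.surjective_im hL hk (γ + (-i : ℤ) * Real.pi)
    obtain ⟨n, rfl⟩ := h.exhaustive μ _ ((hZ μ).isEigenfunction hμ)
    have hi := (hm n).symm.trans hμ
    rw [add_right_inj, mul_left_inj' Real.pi_ne_zero, Int.cast_inj] at hi
    exact ⟨n, neg_eq_iff_eq_neg.2 hi⟩
  obtain ⟨j₀, hj⟩ := exists_eq_add_of_strictMono_of_surjective hmono hsurj
  refine ⟨j₀ * Real.pi - γ, fun n => ?_⟩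
  rw [hm, neg_eq_iff_eq_neg.1 (hj n)]
  push_cast
  ring

end IsEigenbasis

end Eigenbasis

section Asymptotics

open Complex (I exp)

/-- The eigenvalues `(πn + κ) / L` of the problem without potential, which approximate the `λ_n`. -/
noncomputable def freq (L κ : ℝ) (n : ℤ) : ℝ := (Real.pi * n + κ) / L

/-- The eigenfunctions of the problem without potential, with value `i` at `0`. -/
noncomputable def model (L κ : ℝ) (n : ℤ) (s : ℝ) : ℂ := I * exp ((-(freq L κ n * s) : ℝ) * I)

/-- The rate `1 / (1 + |n|)` of the eigenvalue and eigenfunction asymptotics. -/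
noncomputable def decay (n : ℤ) : ℝ := (1 + |(n : ℝ)|)⁻¹

/-- The eigenfunctions `y n`, purely imaginary at `0`, rescaled to take the value `i` there. -/
noncomputable def normalized (y : ℤ → ℝ → ℂ) (n : ℤ) (s : ℝ) : ℂ := (y n 0).im⁻¹ • y n s

/-- The eigenvalues, eigenfunctions and normalizing constants agree with those of the problem
without potential up to `M / (1 + |n|)`. -/
structure HasAsymptotics (L κ M : ℝ) (lam : ℤ → ℝ) (y : ℤ → ℝ → ℂ) : Prop where
  abs_sub_freq_le : ∀ n, |lam n - freq L κ n| ≤ M * decay n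
  norm_sub_model_le : ∀ n, ∀ s ∈ Icc 0 L, ‖normalized y n s - model L κ n s‖ ≤ M * decay n
  abs_sq_sub_le : ∀ n, |(y n 0).im ^ 2 - L⁻¹| ≤ M * decay n

variable {L κ γ : ℝ} {k : ℝ → ℂ} {lam : ℤ → ℝ} {y : ℤ → ℝ → ℂ}

theorem decay_pos (n : ℤ) : 0 < decay n := by unfold decay; positivity

theorem decay_le_one (n : ℤ) : decay n ≤ 1 :=
  inv_le_one_of_one_le₀ (le_add_of_nonneg_right (abs_nonneg _))

theorem norm_model (L κ : ℝ) (n : ℤ) (s : ℝ) : ‖model L κ n s‖ = 1 := by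
  rw [model, norm_mul, Complex.norm_I, Complex.norm_exp_ofReal_mul_I, one_mul]

theorem norm_exp_sub_exp_ofReal_mul_I_le (z : ℂ) (x : ℝ) :
    ‖exp z - exp (x * I)‖ ≤ ‖z - x * I‖ * Real.exp ‖z - x * I‖ := by
  have h := Complex.norm_exp_sub_sum_le_norm_mul_exp (z - x * I) 1
  have hfactor : exp z - exp (x * I) = exp (x * I) * (exp (z - x * I) - 1) := by
    rw [mul_sub, ← Complex.exp_add, mul_one, add_sub_cancel]
  rw [hfactor, norm_mul, Complex.norm_exp_ofReal_mul_I, one_mul]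
  simpa using h

/- The number of the eigenvalue is read off the terminal Prüfer angle, which is `-λL + O(1/|λ|)`. -/
theorem exists_abs_sub_freq_le (hL : 0 < L) {M : ℝ} {Θ : ℤ → ℝ}
    (hΘ : ∀ n, Θ n = -(Real.pi * n + κ)) (h : ∀ n, |Θ n + lam n * L| ≤ M / (1 + |lam n|)) :
    ∃ C, (∀ n, (1 + |lam n|)⁻¹ ≤ C * decay n) ∧
      ∀ n, |lam n - freq L κ n| ≤ M / L * (1 + |lam n|)⁻¹ := by
  have hM : 0 ≤ M := by
    have := (abs_nonneg _).trans (h 0)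
    rwa [le_div_iff₀ (by positivity), zero_mul] at this
  have hfreq (n : ℤ) : Θ n + lam n * L = (lam n - freq L κ n) * L := by
    rw [hΘ, freq]
    field_simp
    ring
  refine ⟨1 + L + M + |κ|, fun n => ?_, fun n => ?_⟩
  · rw [decay, ← div_eq_mul_inv, inv_le_comm₀ (by positivity) (by positivity), inv_div,
      div_le_iff₀ (by positivity)]
    have hn : |(n : ℝ)| ≤ L * |lam n| + M + |κ| :=
      calc |(n : ℝ)| ≤ Real.pi * |(n : ℝ)| :=
            le_mul_of_one_le_left (abs_nonneg _) (by linarith [Real.pi_gt_three])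
        _ = |lam n * L - (Θ n + lam n * L) - κ| := by
            rw [hΘ, ← abs_of_pos Real.pi_pos, ← abs_mul, abs_of_pos Real.pi_pos]
            ring_nf
        _ ≤ |lam n * L| + |Θ n + lam n * L| + |κ| := by
            linarith [abs_sub (lam n * L - (Θ n + lam n * L)) κ,
              abs_sub (lam n * L) (Θ n + lam n * L)]
        _ ≤ _ := by
            rw [abs_mul, abs_of_pos hL, mul_comm]
            gcongr
            exact (h n).trans (div_le_self hM (by linarith [abs_nonneg (lam n)]))
    have hpos : 0 ≤ (1 + M + |κ|) * |lam n| := by positivity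
    linarith
  · have hn := h n
    rw [hfreq, abs_mul, abs_of_pos hL, ← le_div_iff₀ hL, div_right_comm] at hn
    rwa [← div_eq_mul_inv]

theorem norm_phase_sub_freq_le (hL : 0 < L) {M lam : ℝ} {n : ℤ} {Z : ℝ → ℂ} {s : ℝ}
    (hs : s ∈ Icc 0 L) (hZ : ‖Z s + (lam * s : ℝ) * I‖ ≤ M / (1 + |lam|))
    (hlam : |lam - freq L κ n| ≤ M / L * (1 + |lam|)⁻¹) :
    ‖Z s - (-(freq L κ n * s) : ℝ) * I‖ ≤ 2 * M * (1 + |lam|)⁻¹ := by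
  have hsplit : Z s - (-(freq L κ n * s) : ℝ) * I =
      (Z s + (lam * s : ℝ) * I) - ((lam - freq L κ n) * s : ℝ) * I := by
    push_cast
    ring
  have hshift : ‖(((lam - freq L κ n) * s : ℝ) : ℂ) * I‖ ≤ M * (1 + |lam|)⁻¹ := by
    rw [norm_mul, Complex.norm_I, mul_one, Complex.norm_real, Real.norm_eq_abs, abs_mul,
      abs_of_nonneg hs.1]
    refine (mul_le_mul hlam hs.2 hs.1 ((abs_nonneg _).trans hlam)).trans_eq ?_
    field_simp
  rw [div_eq_mul_inv] at hZ
  rw [hsplit]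
  linarith [norm_sub_le (Z s + (lam * s : ℝ) * I) (((lam - freq L κ n) * s : ℝ) * I)]

theorem abs_sq_sub_inv_le (hL : 0 < L) {Y : ℝ → ℂ} {r a ε D : ℝ} (ha : 0 < a)
    (hY : ContinuousOn Y (Icc 0 L)) (hr : r ^ 2 * ∫ s in 0..L, ‖Y s‖ ^ 2 = 1)
    (hlow : ∀ s ∈ Icc 0 L, a ≤ ‖Y s‖) (hε : ∀ s ∈ Icc 0 L, |‖Y s‖ - 1| ≤ ε) (hεD : ε ≤ D) :
    |r ^ 2 - L⁻¹| ≤ (D + 2) / (L * a ^ 2) * ε := by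
  have hε0 : 0 ≤ ε := (abs_nonneg _).trans (hε 0 (left_mem_Icc.2 hL.le))
  have hint : IntervalIntegrable (fun s => ‖Y s‖ ^ 2) volume 0 L :=
    ((hY.norm.pow 2).mono (uIcc_of_le hL.le).subset).intervalIntegrable
  have defect : |(∫ s in 0..L, ‖Y s‖ ^ 2) - L| ≤ (D + 2) * ε * |L - 0| := by
    have h := intervalIntegral.integral_sub hint (intervalIntegrable_const (c := (1 : ℝ)))
    rw [integral_one, sub_zero] at h
    rw [← h, ← Real.norm_eq_abs]
    refine intervalIntegral.norm_integral_le_of_norm_le_const fun s hs => ?_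
    rw [uIoc_of_le hL.le] at hs
    have hs' := hε s (Ioc_subset_Icc_self hs)
    have hfactor : ‖Y s‖ ^ 2 - 1 = (‖Y s‖ + 1) * (‖Y s‖ - 1) := by ring
    rw [hfactor, Real.norm_eq_abs, abs_mul]
    refine mul_le_mul ?_ hs' (abs_nonneg _) (by linarith)
    rw [abs_of_nonneg (by positivity)]
    linarith [(abs_le.1 hs').2]
  have lower : a ^ 2 * L ≤ ∫ s in 0..L, ‖Y s‖ ^ 2 := by
    have h := intervalIntegral.integral_mono_on hL.le intervalIntegrable_const hint
      fun s hs => pow_le_pow_left₀ ha.le (hlow s hs) 2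
    rwa [intervalIntegral.integral_const, sub_zero, smul_eq_mul, mul_comm] at h
  have hr2 : r ^ 2 ≤ (a ^ 2 * L)⁻¹ := by
    rw [le_inv_comm₀ (by_contra fun h => ?_) (by positivity), ← eq_inv_of_mul_eq_one_right hr]
    · exact lower
    · rw [le_antisymm (not_lt.1 h) (sq_nonneg r), zero_mul] at hr
      exact zero_ne_one hr
  have hdiff : r ^ 2 - L⁻¹ = -(r ^ 2 * ((∫ s in 0..L, ‖Y s‖ ^ 2) - L) * L⁻¹) := by
    rw [mul_sub, hr]
    field_simp
    ring
  rw [hdiff, abs_neg, abs_mul, abs_mul, abs_of_nonneg (sq_nonneg r), abs_of_pos (inv_pos.2 hL)]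
  rw [sub_zero, abs_of_pos hL] at defect
  calc r ^ 2 * |(∫ s in 0..L, ‖Y s‖ ^ 2) - L| * L⁻¹
      ≤ (a ^ 2 * L)⁻¹ * ((D + 2) * ε * L) * L⁻¹ := by gcongr
    _ = _ := by field_simp

theorem IsEigenbasis.normalized_eq (h : IsEigenbasis L k γ lam y) (hk : ContinuousOn k (Icc 0 L))
    {n : ℤ} {Z : ℝ → ℂ} (hZ : IsPhase L k (lam n) Z) {s : ℝ} (hs : s ∈ Icc 0 L) :
    normalized y n s = I * exp (Z s) := by
  have hn := h.isEigenfunction n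
  rw [normalized, hn.isSolution.eq_smul_exp_phase hk hn.left hZ hs, inv_smul_smul₀ hn.im_ne_zero]

theorem IsEigenbasis.sq_mul_integral_normalized (h : IsEigenbasis L k γ lam y) (n : ℤ) :
    (y n 0).im ^ 2 * ∫ s in 0..L, ‖normalized y n s‖ ^ 2 = 1 := by
  have hn := h.orthonormal n n
  rw [if_pos rfl] at hn
  rw [← hn, ← intervalIntegral.integral_const_mul]
  congr 1 with s
  have hne := (h.isEigenfunction n).im_ne_zero
  rw [normalized, norm_smul, real_inner_self_eq_norm_sq, mul_pow, norm_inv, inv_pow,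
    Real.norm_eq_abs, sq_abs, mul_inv_cancel_left₀ (pow_ne_zero 2 hne)]

theorem IsEigenbasis.exists_log_normalized (h : IsEigenbasis L k γ lam y) (hL : 0 < L)
    (hk : ContDiff ℝ 1 k) :
    ∃ κ M, (∀ n, |lam n - freq L κ n| ≤ M * decay n) ∧ ∀ n, ∀ s ∈ Icc 0 L, ∃ z,
      normalized y n s = I * exp z ∧ ‖z - (-(freq L κ n * s) : ℝ) * I‖ ≤ M * decay n := by
  choose Z hZ using exists_isPhase hL.le hk.continuous
  obtain ⟨κ, hκ⟩ := h.exists_im_phase_eq hL hk hZ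
  obtain ⟨M, hM, hZM⟩ := exists_norm_phase_add_le hL.le hk
  have hΘ (n : ℤ) : |(Z (lam n) L).im + lam n * L| ≤ M / (1 + |lam n|) := by
    have := (Complex.abs_im_le_norm _).trans (hZM _ _ (hZ (lam n)) L (right_mem_Icc.2 hL.le))
    rwa [Complex.add_im, Complex.im_ofReal_mul, Complex.I_im, mul_one] at this
  obtain ⟨C, hdecay, hfreq⟩ := exists_abs_sub_freq_le hL hκ hΘ
  have enlarge {A : ℝ} (hAM : A ≤ M / L + 2 * M) (n : ℤ) :
      A * (1 + |lam n|)⁻¹ ≤ (M / L + 2 * M) * C * decay n := by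
    rw [mul_assoc]
    exact mul_le_mul hAM (hdecay n) (by positivity) (by positivity)
  refine ⟨κ, (M / L + 2 * M) * C, fun n => ?_, fun n s hs => ⟨Z (lam n) s, ?_, ?_⟩⟩
  · exact (hfreq n).trans (enlarge (by linarith) n)
  · exact h.normalized_eq hk.continuous.continuousOn (hZ _) hs
  · exact (norm_phase_sub_freq_le hL hs (hZM _ _ (hZ (lam n)) s hs) (hfreq n)).trans
      (enlarge (le_add_of_nonneg_left (by positivity)) n)

theorem IsEigenbasis.exists_hasAsymptotics (h : IsEigenbasis L k γ lam y) (hL : 0 < L)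
    (hk : ContDiff ℝ 1 k) : ∃ κ M, HasAsymptotics L κ M lam y := by
  obtain ⟨κ, M, hlam, hlog⟩ := h.exists_log_normalized hL hk
  have hM : 0 ≤ M := nonneg_of_mul_nonneg_left ((abs_nonneg _).trans (hlam 0)) (decay_pos 0)
  have le_M (n : ℤ) : M * decay n ≤ M := mul_le_of_le_one_right hM (decay_le_one n)
  have hnorm (n : ℤ) (s : ℝ) (hs : s ∈ Icc 0 L) :
      ‖normalized y n s - model L κ n s‖ ≤ M * Real.exp M * decay n := by
    obtain ⟨z, hz, hzM⟩ := hlog n s hs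
    rw [hz, model, ← mul_sub, norm_mul, Complex.norm_I, one_mul, mul_right_comm]
    refine (norm_exp_sub_exp_ofReal_mul_I_le _ _).trans ?_
    exact mul_le_mul hzM (Real.exp_le_exp.2 (hzM.trans (le_M n))) (Real.exp_pos _).le
      ((norm_nonneg _).trans hzM)
  have hlow (n : ℤ) (s : ℝ) (hs : s ∈ Icc 0 L) : Real.exp (-M) ≤ ‖normalized y n s‖ := by
    obtain ⟨z, hz, hzM⟩ := hlog n s hs
    have hre := (Complex.abs_re_le_norm _).trans (hzM.trans (le_M n))
    rw [Complex.sub_re, Complex.re_ofReal_mul, Complex.I_re, mul_zero, sub_zero] at hre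
    rw [hz, norm_mul, Complex.norm_I, one_mul, Complex.norm_exp]
    exact Real.exp_le_exp.2 (abs_le.1 hre).1
  have hcont (n : ℤ) : ContinuousOn (normalized y n) (Icc 0 L) :=
    (h.isEigenfunction n).isSolution.continuousOn.const_smul (y n 0).im⁻¹
  have hsq (n : ℤ) := abs_sq_sub_inv_le hL (Real.exp_pos (-M)) (hcont n)
    (h.sq_mul_integral_normalized n) (hlow n)
    (fun s hs => by
      rw [← norm_model L κ n s]
      exact (abs_norm_sub_norm_le _ _).trans (hnorm n s hs))
    (mul_le_of_le_one_right (by positivity) (decay_le_one n))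
  have enlarge {A B : ℝ} (h : A ≤ B) (n : ℤ) : A * decay n ≤ B * decay n :=
    mul_le_mul_of_nonneg_right h (decay_pos n).le
  set B : ℝ := (M * Real.exp M + 2) / (L * Real.exp (-M) ^ 2) * (M * Real.exp M)
  have hB : 0 ≤ B := by positivity
  have hM' : 0 ≤ M * Real.exp M := by positivity
  refine ⟨κ, M + M * Real.exp M + B, fun n => ?_, fun n s hs => ?_, fun n => ?_⟩
  · exact (hlam n).trans (enlarge (by linarith) n)
  · exact (hnorm n s hs).trans (enlarge (by linarith) n)
  · refine (hsq n).trans ?_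
    rw [← mul_assoc]
    exact enlarge (by linarith) n

end Asymptotics

section HalfRange

open Complex (I exp)

variable {E : Type*} [NormedAddCommGroup E] {L : ℝ}

theorem intervalIntegrable_neg_zero {f : ℝ → E}
    (hneg : IntervalIntegrable (fun s => f (-s)) volume 0 L) :
    IntervalIntegrable f volume (-L) 0 := by
  have h := (IntervalIntegrable.iff_comp_neg (by finiteness)).1 hneg
  simp only [neg_neg, neg_zero] at h
  exact h.symm

theorem integral_neg_self_eq [NormedSpace ℝ E] {f : ℝ → E}
    (hpos : IntervalIntegrable f volume 0 L)
    (hneg : IntervalIntegrable (fun s => f (-s)) volume 0 L) :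
    ∫ s in -L..L, f s = ∫ s in 0..L, (f s + f (-s)) := by
  rw [← intervalIntegral.integral_add_adjacent_intervals
    (intervalIntegrable_neg_zero hneg) hpos, intervalIntegral.integral_add hpos hneg,
    intervalIntegral.integral_comp_neg, neg_zero, add_comm]

/-- The extension of `H : (0, L] → ℂ` to `(-L, L]` by Schwarz reflection. Its Fourier coefficients
are real, and they are the half-range coefficients of `H`. -/
noncomputable def reflect (H : ℝ → ℂ) (s : ℝ) : ℂ := if 0 < s then H s else conj (H (-s))

theorem reflect_of_pos (H : ℝ → ℂ) {s : ℝ} (hs : 0 < s) : reflect H s = H s := if_pos hs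

theorem reflect_neg_of_pos (H : ℝ → ℂ) {s : ℝ} (hs : 0 < s) : reflect H (-s) = conj (H s) := by
  rw [reflect, if_neg (not_lt.2 (neg_nonpos.2 hs.le)), neg_neg]

theorem intervalIntegrable_and_integral_reflect [NormedSpace ℝ E] (hL : 0 ≤ L) {H : ℝ → ℂ}
    {φ : ℝ → ℂ → E} (hpos : IntervalIntegrable (fun s => φ s (H s)) volume 0 L)
    (hneg : IntervalIntegrable (fun s => φ (-s) (conj (H s))) volume 0 L) :
    IntervalIntegrable (fun s => φ s (reflect H s)) volume (-L) L ∧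
      ∫ s in -L..L, φ s (reflect H s) = ∫ s in 0..L, (φ s (H s) + φ (-s) (conj (H s))) := by
  have mem {s : ℝ} (hs : s ∈ uIoc 0 L) : 0 < s := (uIoc_of_le hL ▸ hs).1
  have hpos' := hpos.congr fun s hs => (congrArg (φ s) (reflect_of_pos H (mem hs))).symm
  have hneg' := hneg.congr fun s hs => (congrArg (φ (-s)) (reflect_neg_of_pos H (mem hs))).symm
  refine ⟨(intervalIntegrable_neg_zero hneg').trans hpos', ?_⟩
  rw [integral_neg_self_eq hpos' hneg']
  refine intervalIntegral.integral_congr_ae (ae_of_all _ fun s hs => ?_)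
  rw [reflect_of_pos H (mem hs), reflect_neg_of_pos H (mem hs)]

theorem memLp_two_iff_intervalIntegrable {a b : ℝ} (hab : a ≤ b) {f : ℝ → ℂ}
    (hf : IntervalIntegrable f volume a b) :
    MemLp f 2 (volume.restrict (Ioc a b)) ↔
      IntervalIntegrable (fun s => ‖f s‖ ^ 2) volume a b := by
  rw [memLp_two_iff_integrable_sq_norm hf.aestronglyMeasurable,
    intervalIntegrable_iff_integrableOn_Ioc_of_le hab, IntegrableOn]

theorem fourierCoeffOn_reflect (hL : 0 < L) {H : ℝ → ℂ} (hH : IntervalIntegrable H volume 0 L)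
    (hLL : -L < L) (n : ℤ) :
    fourierCoeffOn hLL (reflect H) n =
      L⁻¹ * ∫ s in 0..L, (exp ((Real.pi * (-n : ℤ) * s / L : ℝ) * I) * H s).re := by
  have hcharacter (s : ℝ) : fourier (-n) (s : AddCircle (L - -L)) =
      exp ((Real.pi * (-n : ℤ) * s / L : ℝ) * I) := by
    have hL' : (L : ℂ) ≠ 0 := Complex.ofReal_ne_zero.2 hL.ne'
    rw [fourier_coe_apply]
    congr 1
    push_cast
    field_simp
    ring
  have hconj (s : ℝ) : exp ((Real.pi * (-n : ℤ) * (-s) / L : ℝ) * I) * conj (H s) =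
      conj (exp ((Real.pi * (-n : ℤ) * s / L : ℝ) * I) * H s) := by
    rw [map_mul, ← Complex.exp_conj, map_mul, Complex.conj_I, Complex.conj_ofReal]
    congr 2
    push_cast
    ring
  have hint : IntervalIntegrable (fun s => exp ((Real.pi * (-n : ℤ) * s / L : ℝ) * I) * H s)
      volume 0 L := hH.continuousOn_mul (by fun_prop)
  obtain ⟨-, hintegral⟩ := intervalIntegrable_and_integral_reflect hL.le
    (φ := fun s z => exp ((Real.pi * (-n : ℤ) * s / L : ℝ) * I) * z) hint
    (by
      simp only [hconj]
      exact ⟨Complex.conjCLE.toContinuousLinearMap.integrable_comp hint.1,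
        Complex.conjCLE.toContinuousLinearMap.integrable_comp hint.2⟩)
  simp only [hconj, Complex.add_conj] at hintegral
  rw [fourierCoeffOn_eq_integral]
  simp only [hcharacter, smul_eq_mul, hintegral]
  rw [intervalIntegral.integral_ofReal, intervalIntegral.integral_const_mul, Complex.real_smul,
    Complex.ofReal_mul, ← mul_assoc]
  congr 1
  push_cast
  field_simp
  ring

theorem ae_eq_zero_of_forall_integral_re_eq_zero (hL : 0 < L) {H : ℝ → ℂ}
    (hH : MemLp H 2 (volume.restrict (Ioc 0 L)))
    (h : ∀ n : ℤ, ∫ s in 0..L, (exp ((Real.pi * n * s / L : ℝ) * I) * H s).re = 0) :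
    H =ᵐ[volume.restrict (Ioc 0 L)] 0 := by
  have hint : IntervalIntegrable H volume 0 L :=
    (intervalIntegrable_iff_integrableOn_Ioc_of_le hL.le).2 (hH.integrable one_le_two)
  have hsq := (memLp_two_iff_intervalIntegrable hL.le hint).1 hH
  obtain ⟨hU, -⟩ := intervalIntegrable_and_integral_reflect hL.le (φ := fun _ z => z) hint
    ⟨Complex.conjCLE.toContinuousLinearMap.integrable_comp hint.1,
      Complex.conjCLE.toContinuousLinearMap.integrable_comp hint.2⟩
  obtain ⟨hU2, hU2eq⟩ := intervalIntegrable_and_integral_reflect hL.le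
    (φ := fun _ z => ‖z‖ ^ 2) hsq (by simpa only [RCLike.norm_conj] using hsq)
  have hLL : -L < L := by linarith
  have parseval := hasSum_sq_fourierCoeffOn hLL ((memLp_two_iff_intervalIntegrable hLL.le hU).2 hU2)
  simp only [fourierCoeffOn_reflect hL hint, h, Complex.ofReal_zero, mul_zero, norm_zero,
    zero_pow two_ne_zero, hU2eq, RCLike.norm_conj, ← two_mul] at parseval
  have hzero := parseval.unique hasSum_zero
  rw [smul_eq_zero_iff_right (inv_ne_zero (sub_pos.2 hLL).ne'), intervalIntegral.integral_const_mul,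
    mul_eq_zero_iff_left two_ne_zero, intervalIntegral.integral_of_le hL.le,
    integral_eq_zero_iff_of_nonneg (fun _ => sq_nonneg _) hsq.1] at hzero
  filter_upwards [hzero] with s hs
  exact norm_eq_zero.1 (pow_eq_zero_iff two_ne_zero |>.1 hs)

end HalfRange

section Completeness

open Complex (I exp)

variable {L κ M x : ℝ} {F G : ℝ → ℂ} {lam : ℤ → ℝ} {y : ℤ → ℝ → ℂ}

theorem memLp_two_of_continuousOn (hF : ContinuousOn F (Icc 0 L)) :
    MemLp F 2 (volume.restrict (Ioc 0 L)) := by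
  obtain ⟨K, -, hK⟩ := exists_pos_norm_le_Icc hF
  refine MemLp.of_bound ((hF.mono Ioc_subset_Icc_self).aestronglyMeasurable measurableSet_Ioc) K ?_
  filter_upwards [ae_restrict_mem measurableSet_Ioc] with s hs
  exact hK s (Ioc_subset_Icc_self hs)

theorem inner_toLp (hL : 0 ≤ L) (hF : MemLp F 2 (volume.restrict (Ioc 0 L)))
    (hG : MemLp G 2 (volume.restrict (Ioc 0 L))) :
    ⟪hF.toLp F, hG.toLp G⟫_ℝ = ∫ s in 0..L, ⟪F s, G s⟫_ℝ := by
  rw [L2.inner_def, intervalIntegral.integral_of_le hL]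
  refine integral_congr_ae ?_
  filter_upwards [hF.coeFn_toLp, hG.coeFn_toLp] with s hFs hGs
  rw [hFs, hGs]

theorem norm_toLp_sub_smul_sq (hL : 0 ≤ L) (hF : MemLp F 2 (volume.restrict (Ioc 0 L)))
    (hG : MemLp G 2 (volume.restrict (Ioc 0 L))) (c : ℝ) :
    ‖hF.toLp F - c • hG.toLp G‖ ^ 2 = ∫ s in 0..L, ‖F s - c • G s‖ ^ 2 := by
  rw [← MemLp.toLp_const_smul, ← MemLp.toLp_sub, ← real_inner_self_eq_norm_sq, inner_toLp hL]
  simp only [real_inner_self_eq_norm_sq, Pi.sub_apply, Pi.smul_apply]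

theorem continuous_model (L κ : ℝ) (n : ℤ) : Continuous (model L κ n) := by
  unfold model
  fun_prop

theorem inner_model (L κ : ℝ) (n : ℤ) (s : ℝ) (z : ℂ) :
    ⟪model L κ n s, z⟫_ℝ =
      (exp ((Real.pi * n * s / L : ℝ) * I) * (-I * exp ((κ * s / L : ℝ) * I) * z)).re := by
  have h : conj (model L κ n s) =
      exp ((Real.pi * n * s / L : ℝ) * I) * (-I * exp ((κ * s / L : ℝ) * I)) := by
    rw [model, freq, map_mul, Complex.conj_I, ← Complex.exp_conj, map_mul, Complex.conj_I,
      Complex.conj_ofReal, mul_left_comm, ← Complex.exp_add]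
    congr 2
    push_cast
    ring
  rw [Complex.inner, h, mul_comm z, mul_assoc]

theorem integral_inner_model (hL : 0 < L) (m n : ℤ) :
    ∫ s in 0..L, ⟪model L κ m s, model L κ n s⟫_ℝ = if m = n then L else 0 := by
  have hcos (s : ℝ) : ⟪model L κ m s, model L κ n s⟫_ℝ =
      Real.cos (Real.pi * (m - n : ℤ) / L * s) := by
    have harg : exp ((Real.pi * m * s / L : ℝ) * I) *
        (-I * exp ((κ * s / L : ℝ) * I) * (I * exp ((-((Real.pi * n + κ) / L * s) : ℝ) * I))) =
        -(I * I) * exp ((Real.pi * (m - n : ℤ) / L * s : ℝ) * I) := by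
      rw [mul_mul_mul_comm, ← Complex.exp_add, mul_left_comm, ← Complex.exp_add, neg_mul]
      congr 2
      push_cast
      ring
    rw [inner_model, model, freq, harg, Complex.I_mul_I, neg_neg, one_mul,
      Complex.exp_ofReal_mul_I_re]
  simp only [hcos]
  split_ifs with h
  · simp [h]
  · have hne : Real.pi * (m - n : ℤ) / L ≠ 0 := by
      have : ((m - n : ℤ) : ℝ) ≠ 0 := Int.cast_ne_zero.2 (sub_ne_zero.2 h)
      have := Real.pi_ne_zero
      positivity
    rw [intervalIntegral.integral_comp_mul_left _ hne, integral_cos, mul_zero, Real.sin_zero,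
      sub_zero, div_mul_cancel₀ _ hL.ne', mul_comm Real.pi, Real.sin_int_mul_pi, smul_zero]

theorem ae_eq_zero_of_forall_integral_inner_model (hL : 0 < L)
    (hG : MemLp G 2 (volume.restrict (Ioc 0 L)))
    (h : ∀ n, ∫ s in 0..L, ⟪model L κ n s, G s⟫_ℝ = 0) :
    G =ᵐ[volume.restrict (Ioc 0 L)] 0 := by
  have hH : MemLp (fun s => -I * exp ((κ * s / L : ℝ) * I) * G s) 2
      (volume.restrict (Ioc 0 L)) := by
    refine hG.of_le ((Continuous.aestronglyMeasurable (by fun_prop)).mul hG.1)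
      (ae_of_all _ fun s => ?_)
    rw [norm_mul, norm_mul, norm_neg, Complex.norm_I, Complex.norm_exp_ofReal_mul_I, one_mul,
      one_mul]
  filter_upwards [ae_eq_zero_of_forall_integral_re_eq_zero hL hH
    (by simpa only [inner_model] using h)] with s hs
  exact (mul_eq_zero_iff_left (by simp)).1 hs

theorem orthonormal_toLp {v : ℤ → ℝ → ℂ} (hL : 0 ≤ L)
    (hv : ∀ n, MemLp (v n) 2 (volume.restrict (Ioc 0 L)))
    (h : ∀ m n, ∫ s in 0..L, ⟪v m s, v n s⟫_ℝ = if m = n then 1 else 0) :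
    Orthonormal ℝ fun n => (hv n).toLp (v n) := by
  rw [orthonormal_iff_ite]
  intro m n
  rw [inner_toLp hL, h]

theorem memLp_smul_model (L κ c : ℝ) (n : ℤ) :
    MemLp (c • model L κ n) 2 (volume.restrict (Ioc 0 L)) :=
  memLp_two_of_continuousOn ((continuous_model L κ n).continuousOn.const_smul c)

theorem exists_modelBasis (hL : 0 < L) (κ : ℝ) :
    ∃ e : HilbertBasis ℤ ℝ (Lp ℂ 2 (volume.restrict (Ioc 0 L))),
      ∀ n, e n = (memLp_smul_model L κ (√L)⁻¹ n).toLp ((√L)⁻¹ • model L κ n) := by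
  have hsqrt : (√L)⁻¹ ≠ 0 := inv_ne_zero (Real.sqrt_pos.2 hL).ne'
  have orthonormal := orthonormal_toLp hL.le (memLp_smul_model L κ (√L)⁻¹) fun m n => by
    simp only [Pi.smul_apply, real_inner_smul_left, real_inner_smul_right,
      intervalIntegral.integral_const_mul, integral_inner_model hL]
    rw [← mul_assoc, ← mul_inv, Real.mul_self_sqrt hL.le, mul_ite, mul_zero,
      inv_mul_cancel₀ hL.ne']
  refine ⟨HilbertBasis.mkOfOrthogonalEqBot orthonormal ?_, fun n => ?_⟩
  · refine (Submodule.eq_bot_iff _).2 fun z hz => ?_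
    have hz0 : z =ᵐ[volume.restrict (Ioc 0 L)] 0 := by
      refine ae_eq_zero_of_forall_integral_inner_model (κ := κ) hL (Lp.memLp z) fun n => ?_
      have h := (Submodule.mem_orthogonal _ _).1 hz _ (Submodule.subset_span (mem_range_self n))
      rw [← Lp.toLp_coeFn z (Lp.memLp z), inner_toLp hL.le] at h
      simpa only [Pi.smul_apply, real_inner_smul_left, intervalIntegral.integral_const_mul,
        mul_eq_zero_iff_left hsqrt] using h
    exact (Lp.eq_zero_iff_ae_eq_zero).2 hz0
  · rw [HilbertBasis.coe_mkOfOrthogonalEqBot]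

theorem summable_decay_sq : Summable fun n => decay n ^ 2 := by
  refine Summable.of_norm_bounded_eventually (Real.summable_one_div_int_pow.2 one_lt_two) ?_
  filter_upwards [(finite_singleton (0 : ℤ)).compl_mem_cofinite] with n hn
  have hn' : 0 < |(n : ℝ)| := abs_pos.2 (Int.cast_ne_zero.2 hn)
  rw [Real.norm_of_nonneg (sq_nonneg _), decay, inv_pow, ← one_div, ← sq_abs (n : ℝ)]
  gcongr
  exact le_add_of_nonneg_left zero_le_one

theorem integral_norm_smul_sub_sq_le (hL : 0 < L) {r ε : ℝ}
    (h : ∀ s ∈ Icc 0 L, ‖F s - r • G s‖ ≤ ε) :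
    ∫ s in 0..L, ‖((√L)⁻¹ • F) s - ((√L)⁻¹ * r) • G s‖ ^ 2 ≤ ε ^ 2 := by
  have hbound (s : ℝ) (hs : s ∈ uIoc 0 L) :
      ‖‖((√L)⁻¹ • F) s - ((√L)⁻¹ * r) • G s‖ ^ 2‖ ≤ L⁻¹ * ε ^ 2 := by
    rw [uIoc_of_le hL.le] at hs
    rw [Real.norm_of_nonneg (by positivity), mul_smul, Pi.smul_apply, ← smul_sub, norm_smul,
      mul_pow, norm_inv, Real.norm_of_nonneg (Real.sqrt_nonneg L), inv_pow, Real.sq_sqrt hL.le]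
    gcongr
    exact h s (Ioc_subset_Icc_self hs)
  refine (le_abs_self _).trans ((intervalIntegral.norm_integral_le_of_norm_le_const
    hbound).trans_eq ?_)
  rw [sub_zero, abs_of_pos hL]
  field_simp

/- Bari: an orthonormal system quadratically close to a Hilbert basis is complete. -/
theorem exists_eigenBasis (hL : 0 < L) (hy : ∀ n, MemLp (y n) 2 (volume.restrict (Ioc 0 L)))
    (horth : ∀ m n, ∫ s in 0..L, ⟪y m s, y n s⟫_ℝ = if m = n then 1 else 0)
    (hA : HasAsymptotics L κ M lam y) :
    ∃ b : HilbertBasis ℤ ℝ (Lp ℂ 2 (volume.restrict (Ioc 0 L))),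
      ∀ n, b n = (hy n).toLp (y n) := by
  obtain ⟨e, he⟩ := exists_modelBasis hL κ
  have orthonormal := orthonormal_toLp hL.le hy horth
  refine ⟨HilbertBasis.mkOfOrthogonalEqBot orthonormal
    (orthogonal_span_eq_bot_of_summable orthonormal e ?_), fun n => ?_⟩
  · refine Summable.of_nonneg_of_le (fun n => ?_) (fun n => ?_) (summable_decay_sq.mul_left (M ^ 2))
    · have h := abs_real_inner_le_norm (e n) ((hy n).toLp (y n))
      rw [e.orthonormal.1, orthonormal.1, mul_one] at h
      exact sub_nonneg.2 (pow_le_one₀ (norm_nonneg _) h)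
    · rw [Real.norm_eq_abs, sq_abs]
      refine (one_sub_inner_sq_le (e.orthonormal.1 n) (orthonormal.1 n)
        ((√L)⁻¹ * (y n 0).im⁻¹)).trans ?_
      rw [he, norm_toLp_sub_smul_sq hL.le, ← mul_pow]
      exact integral_norm_smul_sub_sq_le hL fun s hs =>
        norm_sub_rev (normalized y n s) _ ▸ hA.norm_sub_model_le n s hs
  · rw [HilbertBasis.coe_mkOfOrthogonalEqBot]

theorem hasSum_integral_inner_mul (hL : 0 < L) (hyc : ∀ n, ContinuousOn (y n) (Icc 0 L))
    (horth : ∀ m n, ∫ s in 0..L, ⟪y m s, y n s⟫_ℝ = if m = n then 1 else 0)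
    (hA : HasAsymptotics L κ M lam y) (hF : ContinuousOn F (Icc 0 L))
    (hG : ContinuousOn G (Icc 0 L)) (hx : x ∈ Icc 0 L) :
    HasSum (fun n => (∫ s in 0..L, ⟪y n s, F s⟫_ℝ) * ∫ s in 0..x, ⟪y n s, G s⟫_ℝ)
      (∫ s in 0..x, ⟪F s, G s⟫_ℝ) := by
  have hy := fun n => memLp_two_of_continuousOn (hyc n)
  obtain ⟨b, hb⟩ := exists_eigenBasis hL hy horth hA
  have hGx : MemLp ((Ioc 0 x).indicator G) 2 (volume.restrict (Ioc 0 L)) :=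
    (memLp_two_of_continuousOn hG).indicator measurableSet_Ioc
  have truncate (U : ℝ → ℂ) :
      ∫ s in 0..L, ⟪U s, (Ioc 0 x).indicator G s⟫_ℝ = ∫ s in 0..x, ⟪U s, G s⟫_ℝ := by
    have hindicator (s : ℝ) : ⟪U s, (Ioc 0 x).indicator G s⟫_ℝ =
        (Ioc 0 x).indicator (fun s => ⟪U s, G s⟫_ℝ) s := by
      by_cases hs : s ∈ Ioc 0 x <;> simp [hs]
    simp only [hindicator]
    rw [intervalIntegral.integral_of_le hL.le, intervalIntegral.integral_of_le hx.1,
      setIntegral_indicator measurableSet_Ioc, Ioc_inter_Ioc, max_self, min_eq_right hx.2]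
  have h := b.hasSum_inner_mul_inner ((memLp_two_of_continuousOn hF).toLp F) (hGx.toLp _)
  simp only [hb, inner_toLp hL.le, truncate] at h
  simpa only [real_inner_comm] using h

theorem summable_sq_integral_inner (hL : 0 ≤ L) (hyc : ∀ n, ContinuousOn (y n) (Icc 0 L))
    (horth : ∀ m n, ∫ s in 0..L, ⟪y m s, y n s⟫_ℝ = if m = n then 1 else 0)
    (hF : ContinuousOn F (Icc 0 L)) :
    Summable fun n => (∫ s in 0..L, ⟪y n s, F s⟫_ℝ) ^ 2 := by
  have h := (orthonormal_toLp hL (fun n => memLp_two_of_continuousOn (hyc n))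
    horth).inner_products_summable ((memLp_two_of_continuousOn hF).toLp F)
  simpa only [inner_toLp hL, Real.norm_eq_abs, sq_abs] using h

end Completeness

section Coefficients

open Complex (I exp)

variable {L κ M lam : ℝ} {k : ℝ → ℂ} {F X : ℝ → ℂ} {ν : ℤ → ℝ} {y : ℤ → ℝ → ℂ} {n : ℤ}

theorem IsSolution.mul_integral_inner (hX : IsSolution L k lam X) (hL : 0 ≤ L)
    (hk : Continuous k) (hF : ContDiff ℝ 1 F) :
    lam * ∫ s in 0..L, ⟪X s, F s⟫_ℝ = ⟪X 0, I * F 0⟫_ℝ - ⟪X L, I * F L⟫_ℝ +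
      ∫ s in 0..L, ⟪X s, I * (deriv F s + k s * conj (F s))⟫_ℝ := by
  have hXc := hX.continuousOn
  have hV : Continuous fun s => I * (deriv F s + k s * conj (F s)) :=
    continuous_const.mul ((hF.continuous_deriv le_rfl).add
      (hk.mul (Complex.continuous_conj.comp hF.continuous)))
  have integrable {G : ℝ → ℂ} (hG : Continuous G) :
      IntervalIntegrable (fun s => ⟪X s, G s⟫_ℝ) volume 0 L :=
    ContinuousOn.intervalIntegrable_of_Icc hL (hXc.inner (𝕜 := ℝ) hG.continuousOn)
  have derivative (s : ℝ) (hs : s ∈ Icc 0 L) :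
      HasDerivWithinAt (fun s => ⟪X s, I * F s⟫_ℝ)
        (⟪X s, I * (deriv F s + k s * conj (F s))⟫_ℝ - lam * ⟪X s, F s⟫_ℝ) (Icc 0 L) s := by
    have hFs := ((hF.differentiable one_ne_zero s).hasDerivAt.const_mul I).hasDerivWithinAt
      (s := Icc 0 L)
    refine ((hX s hs).inner ℝ hFs).congr_deriv ?_
    simp only [Complex.inner, map_sub, map_mul, map_neg, Complex.conj_I, Complex.conj_conj,
      Complex.conj_ofReal, Complex.mul_re, Complex.mul_im, Complex.add_re, Complex.add_im,
      Complex.sub_re, Complex.sub_im, Complex.neg_re, Complex.neg_im, Complex.I_re, Complex.I_im,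
      Complex.conj_re, Complex.conj_im, Complex.ofReal_re, Complex.ofReal_im]
    ring
  have hIF : Continuous fun s => I * F s := continuous_const.mul hF.continuous
  have ftc := intervalIntegral.integral_eq_sub_of_hasDerivAt_of_le hL
    (hXc.inner (𝕜 := ℝ) hIF.continuousOn)
    (fun s hs => (derivative s (Ioo_subset_Icc_self hs)).hasDerivAt (Icc_mem_nhds hs.1 hs.2))
    ((integrable hV).sub ((integrable hF.continuous).const_mul lam))
  rw [intervalIntegral.integral_sub (integrable hV) ((integrable hF.continuous).const_mul lam),
    intervalIntegral.integral_const_mul] at ftc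
  linarith

/-- The boundary form `⟪X(0), iF(0)⟫ - ⟪X(L), iF(L)⟫` of the canonical Dirac operator. -/
noncomputable def boundaryForm (L : ℝ) (X F : ℝ → ℂ) : ℝ := ⟪X 0, I * F 0⟫_ℝ - ⟪X L, I * F L⟫_ℝ

theorem boundaryForm_smul (L r : ℝ) (X F : ℝ → ℂ) :
    boundaryForm L (r • X) F = r * boundaryForm L X F := by
  simp only [boundaryForm, Pi.smul_apply, real_inner_smul_left, mul_sub]

theorem abs_boundaryForm_le {ε : ℝ} (hL : 0 ≤ L) (hX : ∀ s ∈ Icc 0 L, ‖X s‖ ≤ ε) :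
    |boundaryForm L X F| ≤ ε * (‖F 0‖ + ‖F L‖) := by
  have bound (s : ℝ) (hs : s ∈ Icc 0 L) : |⟪X s, I * F s⟫_ℝ| ≤ ε * ‖F s‖ := by
    refine (abs_real_inner_le_norm _ _).trans ?_
    rw [norm_mul, Complex.norm_I, one_mul]
    exact mul_le_mul_of_nonneg_right (hX s hs) (norm_nonneg _)
  rw [mul_add]
  exact (abs_sub _ _).trans
    (add_le_add (bound 0 (left_mem_Icc.2 hL)) (bound L (right_mem_Icc.2 hL)))

theorem boundaryForm_model_neg (hL : L ≠ 0) (n : ℤ) :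
    boundaryForm L (model L κ (-n)) F = boundaryForm L (model L κ n) F := by
  have terminal : model L κ (-n) L = model L κ n L := by
    rw [model, model, freq, freq, div_mul_cancel₀ _ hL, div_mul_cancel₀ _ hL]
    congr 1
    refine Complex.exp_eq_exp_iff_exists_int.2 ⟨n, ?_⟩
    push_cast
    ring
  have initial : model L κ (-n) 0 = model L κ n 0 := by simp only [model, mul_zero]
  rw [boundaryForm, boundaryForm, terminal, initial]

namespace HasAsymptotics

theorem nonneg (hA : HasAsymptotics L κ M ν y) : 0 ≤ M :=
  nonneg_of_mul_nonneg_left ((abs_nonneg _).trans (hA.abs_sub_freq_le 0)) (decay_pos 0)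

theorem norm_normalized_le (hA : HasAsymptotics L κ M ν y) {s : ℝ} (hs : s ∈ Icc 0 L) :
    ‖normalized y n s‖ ≤ 1 + M := by
  have h := norm_le_norm_add_norm_sub' (normalized y n s) (model L κ n s)
  rw [norm_model] at h
  linarith [hA.norm_sub_model_le n s hs, mul_le_of_le_one_right hA.nonneg (decay_le_one n)]

theorem abs_sq_mul_boundaryForm_sub_le (hA : HasAsymptotics L κ M ν y) (hL : 0 < L) :
    |(y n 0).im ^ 2 * boundaryForm L (normalized y n) F - L⁻¹ * boundaryForm L (model L κ n) F| ≤
      (1 + M + L⁻¹) * M * (‖F 0‖ + ‖F L‖) * decay n := by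
  have hsub : boundaryForm L (normalized y n) F - boundaryForm L (model L κ n) F =
      boundaryForm L (normalized y n - model L κ n) F := by
    simp only [boundaryForm, Pi.sub_apply, inner_sub_left]
    ring
  have hdiff := abs_boundaryForm_le (X := normalized y n - model L κ n) (F := F) hL.le
    (hA.norm_sub_model_le n)
  have hnorm := abs_boundaryForm_le (X := normalized y n) (F := F) hL.le
    fun s hs => hA.norm_normalized_le hs
  have hsplit : (y n 0).im ^ 2 * boundaryForm L (normalized y n) F -
      L⁻¹ * boundaryForm L (model L κ n) F =
      ((y n 0).im ^ 2 - L⁻¹) * boundaryForm L (normalized y n) F +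
        L⁻¹ * boundaryForm L (normalized y n - model L κ n) F := by
    rw [← hsub]
    ring
  rw [hsplit]
  refine (abs_add_le _ _).trans ?_
  rw [abs_mul, abs_mul, abs_of_pos (inv_pos.2 hL)]
  calc _ ≤ M * decay n * ((1 + M) * (‖F 0‖ + ‖F L‖)) +
        L⁻¹ * (M * decay n * (‖F 0‖ + ‖F L‖)) := by
        gcongr
        · exact mul_nonneg hA.nonneg (decay_pos n).le
        · exact hA.abs_sq_sub_le n
    _ = _ := by ring

theorem abs_im_le (hA : HasAsymptotics L κ M ν y) : |(y n 0).im| ≤ 1 + L⁻¹ + M := by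
  have h := (abs_le.1 (hA.abs_sq_sub_le n)).2
  have hM := mul_le_of_le_one_right hA.nonneg (decay_le_one n)
  rw [← sq_abs] at h
  nlinarith [sq_nonneg (|(y n 0).im| - 1)]

theorem abs_pi_mul_div_sub_le (hA : HasAsymptotics L κ M ν y) (hL : 0 < L) :
    |Real.pi * n / L - ν n| ≤ M + |κ| / L := by
  have hsplit : Real.pi * n / L - ν n = -((ν n - freq L κ n) + κ / L) := by
    rw [freq]
    ring
  rw [hsplit, abs_neg]
  refine (abs_add_le _ _).trans (add_le_add ?_ (by rw [abs_div, abs_of_pos hL]))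
  exact (hA.abs_sub_freq_le n).trans (mul_le_of_le_one_right hA.nonneg (decay_le_one n))

end HasAsymptotics

/-- The term of the eigenfunction expansion of `F` at the endpoint `0`, where the eigenfunctions are
purely imaginary. -/
noncomputable def endpointTerm (L : ℝ) (y : ℤ → ℝ → ℂ) (F : ℝ → ℂ) (n : ℤ) : ℝ :=
  (∫ s in 0..L, ⟪y n s, F s⟫_ℝ) * (y n 0).im

/- Through the Lagrange identity, `n` times the `n`-th term agrees with a boundary form of the
`n`-th model function up to a square-summable error; that form is the same for `n` and `-n`. -/
theorem exists_abs_mul_endpointTerm_sub_le (hA : HasAsymptotics L κ M ν y) (hL : 0 < L)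
    (hy : ∀ n, IsSolution L k (ν n) (y n)) (hne : ∀ n, (y n 0).im ≠ 0) (hk : Continuous k)
    (hF : ContDiff ℝ 1 F) :
    ∃ K, ∀ n : ℤ, |n * endpointTerm L y F n - boundaryForm L (model L κ n) F / Real.pi| ≤
      K * (decay n + |∫ s in 0..L, ⟪y n s, I * (deriv F s + k s * conj (F s))⟫_ℝ| +
        |∫ s in 0..L, ⟪y n s, F s⟫_ℝ|) := by
  set R : ℝ := 1 + L⁻¹ + M
  set B : ℝ := (1 + M + L⁻¹) * M * (‖F 0‖ + ‖F L‖)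
  set D : ℝ := M + |κ| / L
  have hM := hA.nonneg
  refine ⟨L / Real.pi * (B + R + D * R), fun n => ?_⟩
  rw [endpointTerm]
  set r : ℝ := (y n 0).im
  set c : ℝ := ∫ s in 0..L, ⟪y n s, F s⟫_ℝ
  set V : ℝ := ∫ s in 0..L, ⟪y n s, I * (deriv F s + k s * conj (F s))⟫_ℝ
  set b : ℝ := boundaryForm L (model L κ n) F
  have hr : |r| ≤ R := hA.abs_im_le
  have hshift : |Real.pi * n / L - ν n| ≤ D := hA.abs_pi_mul_div_sub_le hL
  have lagrange : ν n * c = r * boundaryForm L (normalized y n) F + V := by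
    rw [(hy n).mul_integral_inner hL.le hk hF, ← boundaryForm, ← boundaryForm_smul]
    congr 2
    exact funext fun s => (smul_inv_smul₀ (hne n) _).symm
  have hsplit : n * (c * r) - b / Real.pi = L / Real.pi *
      ((r ^ 2 * boundaryForm L (normalized y n) F - L⁻¹ * b) + r * V +
        (Real.pi * n / L - ν n) * (c * r)) := by
    field_simp
    linear_combination L * r * lagrange
  rw [hsplit, abs_mul, abs_of_pos (by positivity), mul_assoc]
  gcongr
  refine (abs_add_three _ _ _).trans ?_
  rw [abs_mul, abs_mul, abs_mul]
  have : 0 ≤ B := by positivity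
  have : 0 ≤ R := by positivity
  have : 0 ≤ D := by positivity
  have hdecay := (decay_pos n).le
  calc _ ≤ B * decay n + R * |V| + D * (|c| * R) := by
        gcongr
        exact hA.abs_sq_mul_boundaryForm_sub_le hL
    _ ≤ (B + R + D * R) * (decay n + |V| + |c|) := by
        have : 0 ≤ (R + D * R) * decay n + (B + D * R) * |V| + (B + R) * |c| := by positivity
        linarith

theorem summable_mul_of_summable_sq {ι : Type*} {u v : ι → ℝ} (hu : Summable fun i => u i ^ 2)
    (hv : Summable fun i => v i ^ 2) : Summable fun i => u i * v i := by
  refine Summable.of_norm_bounded (hu.add hv) fun i => ?_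
  rw [Real.norm_eq_abs, abs_mul, ← sq_abs (u i), ← sq_abs (v i)]
  nlinarith [sq_nonneg (|u i| - |v i|), sq_nonneg (u i), sq_nonneg (v i), abs_nonneg (u i),
    abs_nonneg (v i)]

theorem summable_abs_add_neg {c b ε : ℤ → ℝ} (hb : ∀ n, b (-n) = b n)
    (hε : Summable fun n => ε n ^ 2) (h : ∀ n, |c n| + |n * c n - b n| ≤ ε n) :
    Summable fun n : ℕ => |c n + c (-n)| := by
  have majorant : Summable fun n : ℤ => decay n * ε n + decay n * ε (-n) :=
    (summable_mul_of_summable_sq summable_decay_sq hε).add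
      (summable_mul_of_summable_sq summable_decay_sq (hε.comp_injective neg_injective))
  refine Summable.of_nonneg_of_le (fun n => abs_nonneg _) (fun n => ?_)
    (majorant.comp_injective Nat.cast_injective)
  have hpair : |((n : ℤ) : ℝ)| * |c n + c (-n)| ≤
      |n * c n - b n| + |(-n : ℤ) * c (-n) - b (-n)| := by
    rw [← abs_mul, hb]
    refine le_of_eq_of_le ?_ (abs_sub _ _)
    push_cast
    ring_nf
  have hsum : (1 + |((n : ℤ) : ℝ)|) * |c n + c (-n)| ≤ ε n + ε (-n) := by
    have hpos := h n
    have hneg := h (-n)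
    push_cast at *
    linarith [abs_add_le (c n) (c (-n))]
  calc |c n + c (-n)| = decay n * ((1 + |((n : ℤ) : ℝ)|) * |c n + c (-n)|) := by
        rw [decay, inv_mul_cancel_left₀ (by positivity)]
    _ ≤ decay n * (ε n + ε (-n)) := mul_le_mul_of_nonneg_left hsum (decay_pos n).le
    _ = decay n * ε n + decay n * ε (-n) := mul_add _ _ _

theorem summable_sq_mul_add_add {ι : Type*} {u v w : ι → ℝ} (K : ℝ)
    (hu : Summable fun i => u i ^ 2) (hv : Summable fun i => v i ^ 2)
    (hw : Summable fun i => w i ^ 2) : Summable fun i => (K * (u i + v i + w i)) ^ 2 := by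
  refine Summable.of_nonneg_of_le (fun i => sq_nonneg _) (fun i => ?_)
    (((hu.add hv).add hw).mul_left (3 * K ^ 2))
  rw [mul_pow, mul_assoc, mul_left_comm]
  refine mul_le_mul_of_nonneg_left ?_ (sq_nonneg K)
  linarith [sq_nonneg (u i - v i), sq_nonneg (v i - w i), sq_nonneg (u i - w i)]

end Coefficients

section Multipliers

open Complex (I exp)

variable {L κ M x : ℝ} {ν : ℤ → ℝ} {y : ℤ → ℝ → ℂ} {n : ℤ}

theorem tendsto_inv_mul_integral_nhdsGT_zero {h : ℝ → ℝ} (hL : 0 < L)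
    (hh : ContinuousOn h (Icc 0 L)) :
    Tendsto (fun x => x⁻¹ * ∫ s in 0..x, h s) (𝓝[>] 0) (𝓝 (h 0)) := by
  have hmem : Icc 0 L ∈ 𝓝[>] 0 := Icc_mem_nhdsGT hL
  have derivative : HasDerivWithinAt (fun x => ∫ s in 0..x, h s) (h 0) (Ici 0) 0 := by
    refine intervalIntegral.integral_hasDerivWithinAt_right IntervalIntegrable.refl
      ⟨Icc 0 L, hmem, hh.aestronglyMeasurable measurableSet_Icc⟩ ?_
    exact (hh 0 (left_mem_Icc.2 hL.le)).mono_of_mem_nhdsWithin hmem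
  simpa [hasDerivWithinAt_iff_tendsto_slope, slope_fun_def] using derivative.Ioi_of_Ici

theorem inv_mul_integral_cos_eq_sinc (ω : ℝ) (hx : x ≠ 0) :
    x⁻¹ * ∫ s in 0..x, Real.cos (ω * s) = Real.sinc (ω * x) := by
  rcases eq_or_ne ω 0 with rfl | hω
  · simp [hx]
  · rw [intervalIntegral.integral_comp_mul_left _ hω, integral_cos, mul_zero, Real.sin_zero,
      sub_zero, Real.sinc_of_ne_zero (mul_ne_zero hω hx), smul_eq_mul]
    field_simp

theorem abs_mul_abs_sinc_sub_sinc_le (u v : ℝ) :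
    |u| * |Real.sinc u - Real.sinc v| ≤ 2 * |u - v| := by
  have mul_sinc (w : ℝ) : w * Real.sinc w = Real.sin w := by
    rcases eq_or_ne w 0 with rfl | hw
    · simp
    · rw [Real.sinc_of_ne_zero hw, mul_div_cancel₀ _ hw]
  have hsplit : u * (Real.sinc u - Real.sinc v) =
      (Real.sin u - Real.sin v) - (u - v) * Real.sinc v := by
    linear_combination mul_sinc u - mul_sinc v
  rw [← abs_mul, hsplit, two_mul]
  refine (abs_sub _ _).trans (add_le_add (Real.abs_sin_sub_sin_le u v) ?_)
  rw [abs_mul]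
  exact mul_le_of_le_one_right (abs_nonneg _) (Real.abs_sinc_le_one v)

theorem abs_sinc_freq_sub_sinc_freq_neg_le (hL : 0 < L) (hx : 0 < x) :
    |Real.sinc (freq L κ n * x) - Real.sinc (freq L κ (-n) * x)| ≤ (2 + 2 * |κ|) * decay n := by
  set Δ : ℝ := |Real.sinc (freq L κ n * x) - Real.sinc (freq L κ (-n) * x)|
  have hΔ : Δ ≤ 2 := by
    refine (abs_sub _ _).trans ?_
    linarith [Real.abs_sinc_le_one (freq L κ n * x), Real.abs_sinc_le_one (freq L κ (-n) * x)]
  have hfreq : |Real.pi * n + κ| * Δ ≤ 4 * |κ| := by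
    have h := abs_mul_abs_sinc_sub_sinc_le (freq L κ n * x) (-(freq L κ (-n) * x))
    have hsum : freq L κ n * x - -(freq L κ (-n) * x) = 2 * κ * (x / L) := by
      rw [freq, freq]
      push_cast
      ring
    have hmul : freq L κ n * x = (Real.pi * n + κ) * (x / L) := by
      rw [freq]
      ring
    rw [Real.sinc_neg, hsum, abs_mul (2 * κ), abs_mul 2, abs_two] at h
    nth_rw 1 [hmul] at h
    rw [abs_mul, mul_right_comm, ← mul_assoc, ← mul_assoc] at h
    norm_num at h
    exact le_of_mul_le_mul_right h (abs_pos.2 (div_pos hx hL).ne')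
  have hn : Real.pi * |(n : ℝ)| ≤ |Real.pi * n + κ| + |κ| := by
    rw [← abs_of_pos Real.pi_pos, ← abs_mul, abs_of_pos Real.pi_pos]
    simpa using abs_sub (Real.pi * n + κ) κ
  rw [decay, ← div_eq_mul_inv, le_div_iff₀ (by positivity)]
  have hΔ0 : 0 ≤ Δ := abs_nonneg _
  nlinarith [Real.pi_gt_three, abs_nonneg κ, abs_nonneg (n : ℝ)]

/-- The coefficient by which averaging over `[0, x]` multiplies the `n`-th term of an eigenfunction
expansion evaluated at `0`. -/
noncomputable def multiplier (y : ℤ → ℝ → ℂ) (x : ℝ) (n : ℤ) : ℝ :=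
  x⁻¹ * ∫ s in 0..x, ⟪normalized y n s, I⟫_ℝ

theorem multiplier_eq (y : ℤ → ℝ → ℂ) (x : ℝ) (n : ℤ) :
    multiplier y x n = (y n 0).im⁻¹ * (x⁻¹ * ∫ s in 0..x, ⟪y n s, I⟫_ℝ) := by
  simp only [multiplier, normalized, real_inner_smul_left, intervalIntegral.integral_const_mul]
  ring

theorem inner_model_I (L κ : ℝ) (n : ℤ) (s : ℝ) :
    ⟪model L κ n s, I⟫_ℝ = Real.cos (freq L κ n * s) := by
  have h : I * conj (model L κ n s) = exp ((freq L κ n * s : ℝ) * I) := by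
    rw [model, map_mul, Complex.conj_I, ← Complex.exp_conj, map_mul, Complex.conj_I,
      Complex.conj_ofReal, ← mul_assoc, mul_neg, Complex.I_mul_I, neg_neg, one_mul]
    congr 1
    push_cast
    ring
  rw [Complex.inner, h, Complex.exp_ofReal_mul_I_re]

namespace HasAsymptotics

theorem abs_multiplier_sub_sinc_le (hA : HasAsymptotics L κ M ν y)
    (hy : ContinuousOn (y n) (Icc 0 L)) (hx : x ∈ Ioc 0 L) :
    |multiplier y x n - Real.sinc (freq L κ n * x)| ≤ M * decay n := by
  have hnormalized : ContinuousOn (normalized y n) (Icc 0 L) := hy.const_smul (y n 0).im⁻¹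
  have hsub : Icc 0 x ⊆ Icc 0 L := Icc_subset_Icc_right hx.2
  have integrable {G : ℝ → ℂ} (hG : ContinuousOn G (Icc 0 L)) :
      IntervalIntegrable (fun s => ⟪G s, I⟫_ℝ) volume 0 x :=
    ContinuousOn.intervalIntegrable_of_Icc hx.1.le
      ((hG.mono hsub).inner (𝕜 := ℝ) continuousOn_const)
  rw [← inv_mul_integral_cos_eq_sinc _ hx.1.ne', multiplier, ← mul_sub, abs_mul,
    abs_of_pos (inv_pos.2 hx.1), inv_mul_le_iff₀ hx.1]
  simp only [← inner_model_I]
  rw [← intervalIntegral.integral_sub (integrable hnormalized)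
    (integrable (continuous_model L κ n).continuousOn), mul_comm, ← Real.norm_eq_abs]
  refine (intervalIntegral.norm_integral_le_of_norm_le_const (C := M * decay n)
    fun s hs => ?_).trans_eq (by rw [sub_zero, abs_of_pos hx.1])
  rw [uIoc_of_le hx.1.le] at hs
  rw [← inner_sub_left]
  refine (norm_inner_le_norm _ _).trans ?_
  rw [Complex.norm_I, mul_one]
  exact hA.norm_sub_model_le n s (hsub (Ioc_subset_Icc_self hs))

theorem abs_multiplier_le (hA : HasAsymptotics L κ M ν y)
    (hy : ContinuousOn (y n) (Icc 0 L)) (hx : x ∈ Ioc 0 L) : |multiplier y x n| ≤ 1 + M := by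
  have h := abs_sub_abs_le_abs_sub (multiplier y x n) (Real.sinc (freq L κ n * x))
  linarith [hA.abs_multiplier_sub_sinc_le hy hx, Real.abs_sinc_le_one (freq L κ n * x),
    mul_le_of_le_one_right hA.nonneg (decay_le_one n)]

theorem abs_multiplier_sub_multiplier_neg_le (hA : HasAsymptotics L κ M ν y)
    (hy : ∀ n, ContinuousOn (y n) (Icc 0 L)) (hx : x ∈ Ioc 0 L) :
    |multiplier y x n - multiplier y x (-n)| ≤ (2 + 2 * |κ| + 2 * M) * decay n := by
  have hpos := hA.abs_multiplier_sub_sinc_le (hy n) hx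
  have hneg := hA.abs_multiplier_sub_sinc_le (hy (-n)) hx
  have hdecay : decay (-n) = decay n := by
    rw [decay, decay, Int.cast_neg, abs_neg]
  rw [abs_sub_comm, hdecay] at hneg
  have hsinc := abs_sinc_freq_sub_sinc_freq_neg_le (κ := κ) (n := n) (hx.1.trans_le hx.2) hx.1
  have htriangle := abs_add_three (multiplier y x n - Real.sinc (freq L κ n * x))
    (Real.sinc (freq L κ n * x) - Real.sinc (freq L κ (-n) * x))
    (Real.sinc (freq L κ (-n) * x) - multiplier y x (-n))
  rw [sub_add_sub_cancel, sub_add_sub_cancel] at htriangle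
  linarith

end HasAsymptotics

theorem tendsto_multiplier (hL : 0 < L) (hy : ContinuousOn (y n) (Icc 0 L))
    (hre : (y n 0).re = 0) (him : (y n 0).im ≠ 0) :
    Tendsto (multiplier y · n) (𝓝[>] 0) (𝓝 1) := by
  have hzero : normalized y n 0 = I := by
    apply Complex.ext <;> simp [normalized, hre, him]
  have h := tendsto_inv_mul_integral_nhdsGT_zero hL
    ((hy.const_smul (y n 0).im⁻¹).inner (𝕜 := ℝ) (continuousOn_const (c := I)))
  change Tendsto _ _ (𝓝 ⟪normalized y n 0, I⟫_ℝ) at h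
  rwa [hzero, real_inner_self_eq_norm_sq, Complex.norm_I, one_pow] at h

end Multipliers

section CanonicalExpansion

open Complex (I)

variable {L κ M γ : ℝ} {k F : ℝ → ℂ} {lam : ℤ → ℝ} {y : ℤ → ℝ → ℂ}

namespace IsEigenbasis

theorem summable_sq_endpointTerm (h : IsEigenbasis L k γ lam y) (hL : 0 < L)
    (hA : HasAsymptotics L κ M lam y) (hF : ContinuousOn F (Icc 0 L)) :
    Summable fun n => endpointTerm L y F n ^ 2 := by
  have hyc := fun n => (h.isEigenfunction n).isSolution.continuousOn
  refine Summable.of_nonneg_of_le (fun n => sq_nonneg _) (fun n => ?_)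
    ((summable_sq_integral_inner hL.le hyc h.orthonormal hF).mul_right ((1 + L⁻¹ + M) ^ 2))
  rw [endpointTerm, mul_pow, ← sq_abs (y n 0).im]
  gcongr
  exact hA.abs_im_le

theorem summable_abs_endpointTerm_add_neg (h : IsEigenbasis L k γ lam y) (hL : 0 < L)
    (hA : HasAsymptotics L κ M lam y) (hk : Continuous k) (hF : ContDiff ℝ 1 F) :
    Summable fun n : ℕ => |endpointTerm L y F n + endpointTerm L y F (-n)| := by
  have hyc := fun n => (h.isEigenfunction n).isSolution.continuousOn
  have hV : Continuous fun s => I * (deriv F s + k s * conj (F s)) :=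
    continuous_const.mul ((hF.continuous_deriv le_rfl).add
      (hk.mul (Complex.continuous_conj.comp hF.continuous)))
  have bessel {G : ℝ → ℂ} (hG : Continuous G) :
      Summable fun n => |∫ s in 0..L, ⟪y n s, G s⟫_ℝ| ^ 2 := by
    simpa only [sq_abs] using
      summable_sq_integral_inner hL.le hyc h.orthonormal hG.continuousOn
  obtain ⟨K, hK⟩ := exists_abs_mul_endpointTerm_sub_le hA hL
    (fun n => (h.isEigenfunction n).isSolution) (fun n => (h.isEigenfunction n).im_ne_zero) hk hF
  refine summable_abs_add_neg (b := fun n => boundaryForm L (model L κ n) F / Real.pi)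
    (fun n => by rw [boundaryForm_model_neg hL.ne'])
    (summable_sq_mul_add_add (K + (1 + L⁻¹ + M)) summable_decay_sq (bessel hV)
      (bessel hF.continuous)) fun n => ?_
  have hterm : |endpointTerm L y F n| ≤ (1 + L⁻¹ + M) * (decay n +
      |∫ s in 0..L, ⟪y n s, I * (deriv F s + k s * conj (F s))⟫_ℝ| +
        |∫ s in 0..L, ⟪y n s, F s⟫_ℝ|) := by
    rw [endpointTerm, abs_mul, mul_comm]
    exact mul_le_mul (hA.abs_im_le) (le_add_of_nonneg_left
      (add_nonneg (decay_pos n).le (abs_nonneg _))) (abs_nonneg _)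
      (by linarith [hA.nonneg, inv_pos.2 hL])
  rw [add_comm |endpointTerm L y F n|, add_mul]
  exact add_le_add (hK n) hterm

/- The expansion of `F` integrated over `[0, x]` converges by completeness; dividing by `x` and
letting `x → 0` recovers the value at `0`. -/
theorem tendsto_symmetric_sum (h : IsEigenbasis L k γ lam y) (hL : 0 < L) (hk : ContDiff ℝ 1 k)
    (hF : ContDiff ℝ 1 F) :
    Tendsto (fun N : ℕ => ∑ n ∈ Finset.Icc (-(N : ℤ)) N, endpointTerm L y F n) atTop
      (𝓝 (F 0).im) := by
  obtain ⟨κ, M, hA⟩ := h.exists_hasAsymptotics hL hk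
  have hyc := fun n => (h.isEigenfunction n).isSolution.continuousOn
  have hFc := hF.continuous.continuousOn (s := Icc 0 L)
  have hmem : ∀ᶠ x in 𝓝[>] 0, x ∈ Ioc 0 L := Ioc_mem_nhdsGT hL
  refine tendsto_symmetric_sum_of_multipliers (l := 𝓝[>] 0) (m := multiplier y) (K := 1 + M)
    (δ := fun n => (2 + 2 * |κ| + 2 * M) * decay n) (s := fun x => x⁻¹ * ∫ s in 0..x, ⟪F s, I⟫_ℝ)
    (h.summable_abs_endpointTerm_add_neg hL hA hk.continuous hF) ?_ ?_ ?_ ?_ ?_ ?_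
  · have hneg : Summable fun n : ℤ => |endpointTerm L y F (-n)| ^ 2 := by
      simp only [sq_abs]
      exact (h.summable_sq_endpointTerm hL hA hFc).comp_injective neg_injective
    refine (((summable_mul_of_summable_sq hneg summable_decay_sq).mul_left
      (2 + 2 * |κ| + 2 * M)).comp_injective Nat.cast_injective).congr fun n => ?_
    exact mul_left_comm _ _ _
  · exact hmem.mono fun x hx n => hA.abs_multiplier_le (hyc n) hx
  · exact hmem.mono fun x hx n => hA.abs_multiplier_sub_multiplier_neg_le hyc hx
  · exact fun n => tendsto_multiplier hL (hyc n) (h.isEigenfunction n).left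
      (h.isEigenfunction n).im_ne_zero
  · refine hmem.mono fun x hx => ?_
    have parseval := (hasSum_integral_inner_mul hL hyc h.orthonormal hA hFc
      (continuousOn_const (c := I)) (Ioc_subset_Icc_self hx)).mul_left x⁻¹
    refine parseval.congr_fun fun n => ?_
    rw [endpointTerm, multiplier_eq, mul_assoc,
      mul_inv_cancel_left₀ (h.isEigenfunction n).im_ne_zero]
    ring
  · have := tendsto_inv_mul_integral_nhdsGT_zero hL
      (hFc.inner (𝕜 := ℝ) (continuousOn_const (c := I)))
    simpa using this

end IsEigenbasis

end CanonicalExpansion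

section Liouville

theorem exists_contDiff_one_hasDerivAt {E : Type*} [NormedAddCommGroup E] [NormedSpace ℝ E]
    [CompleteSpace E] {v : ℝ → E} (hv : Continuous v) (a : ℝ) (c : E) :
    ∃ w, ContDiff ℝ 1 w ∧ w a = c ∧ ∀ x, HasDerivAt w (v x) x := by
  have derivative (x : ℝ) : HasDerivAt (fun x => c + ∫ s in a..x, v s) (v x) x :=
    (hv.integral_hasStrictDerivAt a x).hasDerivAt.const_add c
  refine ⟨fun x => c + ∫ s in a..x, v s, ?_, by simp, derivative⟩
  refine contDiff_one_iff_deriv.2 ⟨fun x => (derivative x).differentiableAt, ?_⟩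
  rwa [funext fun x => (derivative x).deriv]

theorem exists_continuous_eqOn_Icc {X : Type*} [TopologicalSpace X] {a b : ℝ}
    {v : ℝ → X} (hab : a ≤ b) (hv : ContinuousOn v (Icc a b)) :
    ∃ w, Continuous w ∧ EqOn w v (Icc a b) ∧ range w ⊆ v '' Icc a b :=
  ⟨IccExtend hab ((Icc a b).domRestrict v), hv.domRestrict.Icc_extend',
    fun _ hx => IccExtend_of_mem _ _ hx,
    ((IccExtend_range _ _).trans (range_domRestrict _ _)).subset⟩

theorem exists_contDiff_one_eqOn_Icc {E : Type*} [NormedAddCommGroup E] [NormedSpace ℝ E]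
    [CompleteSpace E] {a b : ℝ} {f : ℝ → E} (hab : a < b) (hf : ContDiffOn ℝ 1 f (Icc a b)) :
    ∃ g, ContDiff ℝ 1 g ∧ EqOn g f (Icc a b) := by
  obtain ⟨f', hf', hf'eq, -⟩ := exists_continuous_eqOn_Icc hab.le
    (hf.continuousOn_derivWithin (uniqueDiffOn_Icc hab) le_rfl)
  obtain ⟨g, hg, hga, hderiv⟩ := exists_contDiff_one_hasDerivAt hf' a (f a)
  refine ⟨g, hg, eq_of_derivWithin_eq (hg.differentiable_one.differentiableOn)
    (hf.differentiableOn one_ne_zero) (fun x hx => ?_) hga⟩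
  have hx' := Ico_subset_Icc_self hx
  rw [← hf'eq hx']
  exact (hderiv x).hasDerivWithinAt.derivWithin (uniqueDiffOn_Icc hab x hx')

theorem exists_orderIso_hasDerivAt {σ : ℝ → ℝ} {m : ℝ} (a : ℝ) (hσ : Continuous σ) (hm : 0 < m)
    (hσm : ∀ x, m ≤ σ x) :
    ∃ ξ : ℝ ≃o ℝ, ξ a = 0 ∧ ContDiff ℝ 1 ξ.symm ∧ ∀ x, HasDerivAt ξ (σ x) x := by
  obtain ⟨ξ, hξc, hξa, hξ⟩ := exists_contDiff_one_hasDerivAt hσ a 0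
  have hpos (x : ℝ) : 0 < σ x := hm.trans_le (hσm x)
  have hmono : StrictMono ξ := strictMono_of_hasDerivAt_pos hξ hpos
  have expand ⦃x y : ℝ⦄ (hxy : x ≤ y) : m * (y - x) ≤ ξ y - ξ x :=
    mul_sub_le_image_sub_of_le_deriv (fun z => (hξ z).differentiableAt)
      (fun z => (hξ z).deriv ▸ hσm z) hxy
  have htop : Tendsto ξ atTop atTop := by
    refine tendsto_atTop_mono' _ ((eventually_ge_atTop a).mono fun x hx => ?_)
      ((tendsto_atTop_add_const_right _ (-a) tendsto_id).const_mul_atTop hm)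
    simp only [id]
    linarith [expand hx]
  have hbot : Tendsto ξ atBot atBot := by
    refine tendsto_atBot_mono' _ ((eventually_le_atBot a).mono fun x hx => ?_)
      ((tendsto_atBot_add_const_right _ (-a) tendsto_id).const_mul_atBot hm)
    simp only [id]
    linarith [expand hx]
  set Ξ : ℝ ≃o ℝ := hmono.orderIsoOfSurjective ξ (hξc.continuous.surjective htop hbot)
  have symm : ContDiff ℝ 1 Ξ.symm :=
    Ξ.toHomeomorph.contDiff_symm_deriv (fun x => (hpos x).ne') hξ hξc
  exact ⟨Ξ, hξa, symm, hξ⟩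

theorem exists_orderIso_hasDerivAt_of_pos {ρ : ℝ → ℝ} {a b : ℝ} (hab : a ≤ b)
    (hρ : ContinuousOn ρ (Icc a b)) (hpos : ∀ x ∈ Icc a b, 0 < ρ x) :
    ∃ ξ : ℝ ≃o ℝ, ξ a = 0 ∧ ContDiff ℝ 1 ξ.symm ∧ ∀ x ∈ Icc a b, HasDerivAt ξ (ρ x) x := by
  obtain ⟨x₀, hx₀, hmin⟩ := isCompact_Icc.exists_isMinOn (nonempty_Icc.2 hab) hρ
  obtain ⟨σ, hσ, hσρ, hrange⟩ := exists_continuous_eqOn_Icc hab hρ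
  have hσm (x : ℝ) : ρ x₀ ≤ σ x := by
    obtain ⟨y, hy, hyx⟩ := hrange (mem_range_self x)
    exact hyx ▸ hmin hy
  obtain ⟨ξ, hξa, hsymm, hξ⟩ := exists_orderIso_hasDerivAt a hσ (hpos x₀ hx₀) hσm
  exact ⟨ξ, hξa, hsymm, fun x hx => hσρ hx ▸ hξ x⟩

end Liouville

section Transform

open Complex (I exp)

/-- The right-hand side `i (v - λρ) z - c z̄` of the Dirac-type system written as a single equation
for `f + i g`, with `v = (p + q) / 2` and `c = t - i (p - q) / 2`. -/
noncomputable def diracField (p q t ρ : ℝ → ℝ) (lam x : ℝ) (z : ℂ) : ℂ :=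
  ((p x + q x) / 2 - lam * ρ x : ℝ) * I * z - (t x - ((p x - q x) / 2 : ℝ) * I) * conj z

/-- `Y = f + i g` solves the Dirac-type system on `[a, b]`. -/
def IsDiracSolution (a b : ℝ) (p q t ρ : ℝ → ℝ) (lam : ℝ) (Y : ℝ → ℂ) : Prop :=
  ∀ x ∈ Icc a b, HasDerivWithinAt Y (diracField p q t ρ lam x (Y x)) (Icc a b) x

/-- The Liouville variable `ξ = ∫ ρ` and the gauge angle `ω = α + ∫ (p + q) / 2` carry the
Dirac-type system to the canonical one with potential `k`. To have `ξ`, `ω` and `k` defined on all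
of `ℝ`, they are prescribed on `[a, b]` only. -/
structure IsLiouvilleTransform (a b : ℝ) (p q t ρ : ℝ → ℝ) (ξ : ℝ ≃o ℝ) (ω : ℝ → ℝ)
    (k : ℝ → ℂ) : Prop where
  weight_pos : ∀ x ∈ Icc a b, 0 < ρ x
  map_left : ξ a = 0
  hasDerivAt : ∀ x ∈ Icc a b, HasDerivAt ξ (ρ x) x
  contDiff_symm : ContDiff ℝ 1 ξ.symm
  hasDerivAt_gauge : ∀ x ∈ Icc a b, HasDerivAt ω ((p x + q x) / 2) x
  contDiff_gauge : ContDiff ℝ 1 ω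
  potential_mul : ∀ x ∈ Icc a b,
    k (ξ x) * ρ x = (t x - ((p x - q x) / 2 : ℝ) * I) * exp (-(ω x * I)) ^ 2
  contDiff_potential : ContDiff ℝ 1 k

/-- The function `Y` in the Liouville variable `s = ξ x`, with the gauge angle `ω` removed. -/
noncomputable def transformed (ξ : ℝ ≃o ℝ) (ω : ℝ → ℝ) (Y : ℝ → ℂ) (s : ℝ) : ℂ :=
  exp (-(ω (ξ.symm s) * I)) * Y (ξ.symm s)

variable {a b α β lam : ℝ} {p q t ρ ω : ℝ → ℝ} {ξ : ℝ ≃o ℝ} {k X Y F : ℝ → ℂ}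

theorem diracField_re (x : ℝ) (z : ℂ) :
    (diracField p q t ρ lam x z).re = -t x * z.re - (q x - lam * ρ x) * z.im := by
  simp only [diracField, Complex.sub_re, Complex.sub_im, Complex.mul_re, Complex.mul_im,
    Complex.ofReal_re, Complex.ofReal_im, Complex.I_re, Complex.I_im, Complex.conj_re,
    Complex.conj_im]
  ring

theorem diracField_im (x : ℝ) (z : ℂ) :
    (diracField p q t ρ lam x z).im = t x * z.im + (p x - lam * ρ x) * z.re := by
  simp only [diracField, Complex.sub_re, Complex.sub_im, Complex.mul_re, Complex.mul_im,
    Complex.ofReal_re, Complex.ofReal_im, Complex.I_re, Complex.I_im, Complex.conj_re,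
    Complex.conj_im]
  ring

theorem satisfiesDiracSystem_re_im_iff (hp : ContinuousOn p (Icc a b))
    (hq : ContinuousOn q (Icc a b)) (ht : ContinuousOn t (Icc a b))
    (hρ : ContinuousOn ρ (Icc a b)) :
    SatisfiesDiracSystem a b p q t ρ lam (fun x => (Y x).re) (fun x => (Y x).im) ↔
      IsDiracSolution a b p q t ρ lam Y := by
  constructor
  · rintro ⟨f', g', hf, hg, -, -, hg', hf'⟩ x hx
    have field_eq : diracField p q t ρ lam x (Y x) = f' x + g' x * I := by
      apply Complex.ext
      · rw [diracField_re, Complex.add_re, Complex.ofReal_re, Complex.re_ofReal_mul, Complex.I_re]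
        linarith [hf' x hx]
      · rw [diracField_im, Complex.add_im, Complex.ofReal_im, Complex.im_ofReal_mul, Complex.I_im]
        linarith [hg' x hx]
    rw [field_eq]
    exact ((hf x hx).ofReal_comp.add ((hg x hx).ofReal_comp.mul_const I)).congr_of_mem
      (fun y _ => (Complex.re_add_im (Y y)).symm) hx
  · intro h
    have hY : ContinuousOn Y (Icc a b) := fun x hx => (h x hx).continuousWithinAt
    have hre (x : ℝ) (hx : x ∈ Icc a b) :=
      Complex.reCLM.hasFDerivAt.comp_hasDerivWithinAt x (h x hx)
    have him (x : ℝ) (hx : x ∈ Icc a b) :=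
      Complex.imCLM.hasFDerivAt.comp_hasDerivWithinAt x (h x hx)
    refine ⟨_, _, hre, him, ?_, ?_, fun x _ => ?_, fun x _ => ?_⟩
    all_goals simp only [Complex.reCLM_apply, Complex.imCLM_apply, diracField_re, diracField_im]
    · fun_prop
    · fun_prop
    · ring
    · ring

theorem IsDiracSolution.isDiracEigenvalue (hY : IsDiracSolution a b p q t ρ lam Y) (hab : a ≤ b)
    (hp : ContinuousOn p (Icc a b)) (hq : ContinuousOn q (Icc a b)) (ht : ContinuousOn t (Icc a b))
    (hρ : ContinuousOn ρ (Icc a b)) (hbc : DiracBC a b α β (fun x => (Y x).re) fun x => (Y x).im)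
    (hne : Y a ≠ 0) : IsDiracEigenvalue a b p q t ρ α β lam :=
  ⟨_, _, (satisfiesDiracSystem_re_im_iff hp hq ht hρ).2 hY, ⟨a, left_mem_Icc.2 hab,
    not_and_or.1 fun h => hne (Complex.ext h.1 h.2)⟩, hbc⟩

theorem real_inner_mk_eq (x y : ℝ) (z : ℂ) : ⟪(⟨x, y⟩ : ℂ), z⟫_ℝ = x * z.re + y * z.im := by
  rw [Complex.inner, Complex.mul_re, Complex.conj_re, Complex.conj_im]
  ring

theorem transformed_apply (ξ : ℝ ≃o ℝ) (ω : ℝ → ℝ) (Y : ℝ → ℂ) (x : ℝ) :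
    transformed ξ ω Y (ξ x) = exp (-(ω x * I)) * Y x := by
  rw [transformed, ξ.symm_apply_apply]

theorem exists_transformed_eq (ξ : ℝ ≃o ℝ) (ω : ℝ → ℝ) (X : ℝ → ℂ) :
    ∃ Y, transformed ξ ω Y = X := by
  refine ⟨fun x => exp (ω x * I) * X (ξ x), funext fun s => ?_⟩
  rw [transformed, ξ.apply_symm_apply, ← mul_assoc, ← Complex.exp_add, neg_add_cancel,
    Complex.exp_zero, one_mul]

theorem conj_exp_neg_ofReal_mul_I (x : ℝ) : conj (exp (-(x * I))) = exp (x * I) := by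
  rw [← Complex.exp_conj, map_neg, map_mul, Complex.conj_ofReal, Complex.conj_I, mul_neg, neg_neg]

theorem re_exp_neg_mul_I_mul (θ : ℝ) (z : ℂ) :
    (exp (-(θ * I)) * z).re = z.re * Real.cos θ + z.im * Real.sin θ := by
  rw [← neg_mul, ← Complex.ofReal_neg, Complex.mul_re, Complex.exp_ofReal_mul_I_re,
    Complex.exp_ofReal_mul_I_im, Real.cos_neg, Real.sin_neg]
  ring

theorem im_exp_neg_mul_I_mul (θ : ℝ) (z : ℂ) :
    (exp (-(θ * I)) * z).im = z.im * Real.cos θ - z.re * Real.sin θ := by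
  rw [← neg_mul, ← Complex.ofReal_neg, Complex.mul_im, Complex.exp_ofReal_mul_I_re,
    Complex.exp_ofReal_mul_I_im, Real.cos_neg, Real.sin_neg]
  ring

theorem im_exp_neg_mul_I_mul_smul (θ x y : ℝ) :
    (exp (-(θ * I)) * ⟨x, y⟩).im • (exp (θ * I) * I) =
      ⟨Real.sin θ ^ 2 * x - Real.sin θ * Real.cos θ * y,
        -(Real.sin θ * Real.cos θ) * x + Real.cos θ ^ 2 * y⟩ := by
  rw [im_exp_neg_mul_I_mul]
  apply Complex.ext
  · rw [Complex.smul_re, Complex.mul_I_re, Complex.exp_ofReal_mul_I_im, smul_eq_mul]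
    ring
  · rw [Complex.smul_im, Complex.mul_I_im, Complex.exp_ofReal_mul_I_re, smul_eq_mul]
    ring

theorem inner_transformed (s : ℝ) :
    ⟪transformed ξ ω Y s, transformed ξ ω F s⟫_ℝ = ⟪Y (ξ.symm s), F (ξ.symm s)⟫_ℝ := by
  rw [transformed, transformed, Complex.inner, Complex.inner, map_mul, conj_exp_neg_ofReal_mul_I,
    mul_mul_mul_comm, ← Complex.exp_add, neg_add_cancel, Complex.exp_zero, one_mul]

theorem IsSolution.apply_zero_ne_zero {L : ℝ} (hX : IsSolution L k lam X)
    (hk : ContinuousOn k (Icc 0 L)) (hL : 0 ≤ L) (hne : ∫ s in 0..L, ⟪X s, X s⟫_ℝ ≠ 0) :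
    X 0 ≠ 0 := by
  intro h0
  have vanish : EqOn X ((0 : ℝ) • X) (Icc 0 L) :=
    hX.eqOn_of_zero_eq hk (hX.smul 0) (by simp [h0])
  refine hne (intervalIntegral.integral_zero_ae (Eventually.of_forall fun s hs => ?_))
  rw [uIoc_of_le hL] at hs
  rw [vanish (Ioc_subset_Icc_self hs), zero_smul, Pi.zero_apply, inner_zero_left]

namespace IsLiouvilleTransform

theorem integral_inner_transformed (h : IsLiouvilleTransform a b p q t ρ ξ ω k) (hab : a ≤ b) :
    ∫ s in 0..ξ b, ⟪transformed ξ ω Y s, transformed ξ ω F s⟫_ℝ =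
      ∫ x in a..b, ρ x * ⟪Y x, F x⟫_ℝ := by
  have image : ξ '' Ioc a b = Ioc 0 (ξ b) := by rw [ξ.image_Ioc, h.map_left]
  have hξb : 0 ≤ ξ b := h.map_left ▸ ξ.monotone hab
  rw [intervalIntegral.integral_of_le hab, intervalIntegral.integral_of_le hξb, ← image,
    integral_image_eq_integral_abs_deriv_smul measurableSet_Ioc
      (fun x hx => (h.hasDerivAt x (Ioc_subset_Icc_self hx)).hasDerivWithinAt) ξ.injective.injOn]
  refine setIntegral_congr_fun measurableSet_Ioc fun x hx => ?_
  simp only [inner_transformed, ξ.symm_apply_apply, smul_eq_mul,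
    abs_of_pos (h.weight_pos x (Ioc_subset_Icc_self hx))]

theorem symm_mem_Icc_iff (h : IsLiouvilleTransform a b p q t ρ ξ ω k) {s : ℝ} :
    ξ.symm s ∈ Icc a b ↔ s ∈ Icc 0 (ξ b) := by
  rw [mem_Icc, mem_Icc, ξ.le_symm_apply, ξ.symm_apply_le, h.map_left]

theorem hasDerivAt_symm (h : IsLiouvilleTransform a b p q t ρ ξ ω k) {s : ℝ}
    (hs : s ∈ Icc 0 (ξ b)) : HasDerivAt ξ.symm (ρ (ξ.symm s))⁻¹ s := by
  have hx := h.symm_mem_Icc_iff.2 hs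
  exact HasDerivAt.of_local_left_inverse ξ.symm.continuous.continuousAt (h.hasDerivAt _ hx)
    (h.weight_pos _ hx).ne' (Eventually.of_forall ξ.apply_symm_apply)

theorem exp_mul_diracField (h : IsLiouvilleTransform a b p q t ρ ξ ω k) {x : ℝ}
    (hx : x ∈ Icc a b) (lam : ℝ) (z : ℂ) :
    exp (-(ω x * I)) * diracField p q t ρ lam x z =
      ((p x + q x) / 2 : ℝ) * I * (exp (-(ω x * I)) * z) +
        ρ x * (-(lam * I) * (exp (-(ω x * I)) * z) - k (ξ x) * conj (exp (-(ω x * I)) * z)) := by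
  have unimodular : exp (-(ω x * I)) * conj (exp (-(ω x * I))) = 1 := by
    rw [conj_exp_neg_ofReal_mul_I, ← Complex.exp_add, neg_add_cancel, Complex.exp_zero]
  rw [diracField, map_mul, Complex.ofReal_sub, Complex.ofReal_mul]
  linear_combination conj (exp (-(ω x * I))) * conj z * h.potential_mul x hx +
    (t x - ((p x - q x) / 2 : ℝ) * I) * exp (-(ω x * I)) * conj z * unimodular

theorem isSolution_transformed (h : IsLiouvilleTransform a b p q t ρ ξ ω k)
    (hY : IsDiracSolution a b p q t ρ lam Y) :
    IsSolution (ξ b) k lam (transformed ξ ω Y) := by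
  intro s hs
  have hx := h.symm_mem_Icc_iff.2 hs
  have hYξ := (hY _ hx).scomp s (h.hasDerivAt_symm hs).hasDerivWithinAt
    fun _ hs => h.symm_mem_Icc_iff.2 hs
  have hω := (h.hasDerivAt_gauge _ hx).scomp s (h.hasDerivAt_symm hs)
  refine ((hω.ofReal_comp.mul_const I).neg.cexp.hasDerivWithinAt.mul hYξ).congr_deriv ?_
  have field_eq := h.exp_mul_diracField hx lam (Y (ξ.symm s))
  have hρ : (ρ (ξ.symm s) : ℂ)⁻¹ * ρ (ξ.symm s) = 1 :=
    inv_mul_cancel₀ (Complex.ofReal_ne_zero.2 (h.weight_pos _ hx).ne')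
  rw [ξ.apply_symm_apply] at field_eq
  simp only [Pi.neg_apply, Function.comp_apply, smul_eq_mul, Complex.real_smul, transformed,
    Complex.ofReal_mul, Complex.ofReal_inv]
  linear_combination (ρ (ξ.symm s) : ℂ)⁻¹ * field_eq +
    (-(lam * I) * (exp (-(ω (ξ.symm s) * I)) * Y (ξ.symm s)) -
      k s * conj (exp (-(ω (ξ.symm s) * I)) * Y (ξ.symm s))) * hρ

theorem isDiracSolution_of_transformed (h : IsLiouvilleTransform a b p q t ρ ξ ω k)
    (hX : IsSolution (ξ b) k lam (transformed ξ ω Y)) : IsDiracSolution a b p q t ρ lam Y := by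
  intro x hx
  have maps : MapsTo ξ (Icc a b) (Icc 0 (ξ b)) := fun x hx =>
    h.symm_mem_Icc_iff.1 (by rwa [ξ.symm_apply_apply])
  have hXξ := (hX _ (maps hx)).scomp x (h.hasDerivAt x hx).hasDerivWithinAt maps
  have hω := (((h.hasDerivAt_gauge x hx).ofReal_comp.mul_const I).cexp).hasDerivWithinAt
    (s := Icc a b)
  have recover (y : ℝ) : Y y = exp (ω y * I) * transformed ξ ω Y (ξ y) := by
    rw [transformed_apply, ← mul_assoc, ← Complex.exp_add, add_neg_cancel, Complex.exp_zero,
      one_mul]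
  refine ((hω.mul hXξ).congr_deriv ?_).congr_of_mem (fun y _ => recover y) hx
  have field_eq := h.exp_mul_diracField hx lam (Y x)
  have inverse : exp (ω x * I) * exp (-(ω x * I)) = 1 := by
    rw [← Complex.exp_add, add_neg_cancel, Complex.exp_zero]
  rw [Function.comp_apply, transformed_apply, Complex.real_smul]
  linear_combination -exp (ω x * I) * field_eq + diracField p q t ρ lam x (Y x) * inverse

theorem isSolution_transformed_iff (h : IsLiouvilleTransform a b p q t ρ ξ ω k) :
    IsSolution (ξ b) k lam (transformed ξ ω Y) ↔ IsDiracSolution a b p q t ρ lam Y :=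
  ⟨h.isDiracSolution_of_transformed, h.isSolution_transformed⟩

theorem transformed_zero (h : IsLiouvilleTransform a b p q t ρ ξ ω k) (Y : ℝ → ℂ) :
    transformed ξ ω Y 0 = exp (-(ω a * I)) * Y a := by
  rw [← h.map_left, transformed_apply]

theorem isEigenfunction_transformed_iff (h : IsLiouvilleTransform a b p q t ρ ξ ω k) :
    IsEigenfunction (ξ b) k (β - ω b : ℝ) lam (transformed ξ ω Y) ↔
      IsDiracSolution a b p q t ρ lam Y ∧
        DiracBC a b (ω a) β (fun x => (Y x).re) (fun x => (Y x).im) ∧ Y a ≠ 0 := by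
  have right : transformed ξ ω Y (ξ b) * exp (-((β - ω b : ℝ) * I)) = exp (-(β * I)) * Y b := by
    rw [transformed_apply, mul_right_comm, ← Complex.exp_add]
    push_cast
    ring_nf
  have left_ne : exp (-(ω a * I)) * Y a ≠ 0 ↔ Y a ≠ 0 :=
    mul_ne_zero_iff_left (Complex.exp_ne_zero _)
  rw [← h.isSolution_transformed_iff, DiracBC, ← re_exp_neg_mul_I_mul, ← re_exp_neg_mul_I_mul,
    ← right, ← left_ne, ← h.transformed_zero]
  exact ⟨fun hX => ⟨hX.isSolution, ⟨hX.left, hX.right⟩, hX.ne_zero⟩,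
    fun hY => ⟨hY.1, hY.2.1.1, hY.2.1.2, hY.2.2⟩⟩

theorem isEigenbasis_transformed (h : IsLiouvilleTransform a b p q t ρ ξ ω k) (hab : a ≤ b)
    {lam : ℤ → ℝ} {Y : ℤ → ℝ → ℂ} (hlam : Monotone lam)
    (hY : ∀ n, IsDiracSolution a b p q t ρ (lam n) (Y n))
    (hbc : ∀ n, DiracBC a b (ω a) β (fun x => (Y n x).re) (fun x => (Y n x).im))
    (horth : ∀ m n, ∫ x in a..b, ρ x * ⟪Y m x, Y n x⟫_ℝ = if m = n then 1 else 0)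
    (hexhaust : ∀ μ Y, IsDiracSolution a b p q t ρ μ Y →
      DiracBC a b (ω a) β (fun x => (Y x).re) (fun x => (Y x).im) → Y a ≠ 0 → μ ∈ range lam) :
    IsEigenbasis (ξ b) k (β - ω b) lam fun n => transformed ξ ω (Y n) where
  isEigenfunction n := by
    have hξb : 0 ≤ ξ b := h.map_left ▸ ξ.monotone hab
    have hne : Y n a ≠ 0 := by
      have hX := (h.isSolution_transformed (hY n)).apply_zero_ne_zero
        h.contDiff_potential.continuous.continuousOn hξb
        (by rw [h.integral_inner_transformed hab, horth, if_pos rfl]; exact one_ne_zero)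
      rw [h.transformed_zero] at hX
      exact right_ne_zero_of_mul hX
    exact h.isEigenfunction_transformed_iff.2 ⟨hY n, hbc n, hne⟩
  monotone := hlam
  orthonormal m n := (h.integral_inner_transformed hab).trans (horth m n)
  exhaustive μ X hX := by
    obtain ⟨Y, rfl⟩ := exists_transformed_eq ξ ω X
    obtain ⟨hY, hbc, hne⟩ := h.isEigenfunction_transformed_iff.1 hX
    exact hexhaust μ Y hY hbc hne

theorem exists_contDiff_one_eqOn_transformed (h : IsLiouvilleTransform a b p q t ρ ξ ω k)
    (hab : a < b) (hF : ContDiffOn ℝ 1 F (Icc a b)) :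
    ∃ G, ContDiff ℝ 1 G ∧ EqOn G (transformed ξ ω F) (Icc 0 (ξ b)) := by
  refine exists_contDiff_one_eqOn_Icc (h.map_left ▸ ξ.strictMono hab) (ContDiffOn.mul ?_ ?_)
  · have hω := Complex.ofRealCLM.contDiff.comp (h.contDiff_gauge.comp h.contDiff_symm)
    exact (hω.mul contDiff_const).neg.cexp.contDiffOn
  · exact hF.comp h.contDiff_symm.contDiffOn fun s hs => h.symm_mem_Icc_iff.2 hs

theorem tendsto_symmetric_sum (h : IsLiouvilleTransform a b p q t ρ ξ ω k) (hab : a < b)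
    {γ : ℝ} {lam : ℤ → ℝ} {Y : ℤ → ℝ → ℂ} (hF : ContDiffOn ℝ 1 F (Icc a b))
    (hY : IsEigenbasis (ξ b) k γ lam fun n => transformed ξ ω (Y n)) :
    Tendsto (fun N : ℕ => ∑ n ∈ Finset.Icc (-(N : ℤ)) N,
        (∫ x in a..b, ρ x * ⟪Y n x, F x⟫_ℝ) • Y n a) atTop
      (𝓝 ((exp (-(ω a * I)) * F a).im • (exp (ω a * I) * I))) := by
  have hξb : 0 < ξ b := h.map_left ▸ ξ.strictMono hab
  obtain ⟨G, hG, hGF⟩ := h.exists_contDiff_one_eqOn_transformed hab hF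
  have coefficient (n : ℤ) : ∫ s in 0..ξ b, ⟪transformed ξ ω (Y n) s, G s⟫_ℝ =
      ∫ x in a..b, ρ x * ⟪Y n x, F x⟫_ℝ := by
    rw [← h.integral_inner_transformed hab.le]
    refine intervalIntegral.integral_congr fun s hs => ?_
    rw [uIcc_of_le hξb.le] at hs
    simp only [hGF hs]
  have left_value (n : ℤ) :
      Y n a = (transformed ξ ω (Y n) 0).im • (exp (ω a * I) * I) := by
    have himag : transformed ξ ω (Y n) 0 = (transformed ξ ω (Y n) 0).im * I :=
      Complex.ext (by simpa using (hY.isEigenfunction n).left) (by simp)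
    rw [Complex.real_smul, mul_left_comm, ← himag, h.transformed_zero, ← mul_assoc,
      ← Complex.exp_add, add_neg_cancel, Complex.exp_zero, one_mul]
  have canonical := hY.tendsto_symmetric_sum hξb h.contDiff_potential hG
  rw [hGF (left_mem_Icc.2 hξb.le), h.transformed_zero] at canonical
  refine (canonical.smul_const (exp (ω a * I) * I)).congr fun N => ?_
  rw [Finset.sum_smul]
  refine Finset.sum_congr rfl fun n _ => ?_
  rw [endpointTerm, coefficient, mul_smul, ← left_value]

end IsLiouvilleTransform

theorem exists_isLiouvilleTransform (hab : a < b) (hp : ContDiffOn ℝ 1 p (Icc a b))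
    (hq : ContDiffOn ℝ 1 q (Icc a b)) (ht : ContDiffOn ℝ 1 t (Icc a b))
    (hρ : ContDiffOn ℝ 1 ρ (Icc a b)) (hpos : ∀ x ∈ Icc a b, 0 < ρ x) (α : ℝ) :
    ∃ ξ ω k, IsLiouvilleTransform a b p q t ρ ξ ω k ∧ ω a = α := by
  obtain ⟨ξ, hξa, hsymm, hξ⟩ := exists_orderIso_hasDerivAt_of_pos hab.le hρ.continuousOn hpos
  obtain ⟨v, hv, hv_eq, -⟩ := exists_continuous_eqOn_Icc hab.le
    (v := fun x => (p x + q x) / 2) (hp.continuousOn.add hq.continuousOn |>.div_const 2)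
  obtain ⟨ω, hω, hωa, hω'⟩ := exists_contDiff_one_hasDerivAt hv a α
  have potential : ContDiffOn ℝ 1 (fun x =>
      (ρ x)⁻¹ • ((t x - ((p x - q x) / 2 : ℝ) * I) * exp (-(ω x * I)) ^ 2)) (Icc a b) := by
    have cast {u : ℝ → ℝ} (hu : ContDiffOn ℝ 1 u (Icc a b)) :
        ContDiffOn ℝ 1 (fun x => (u x : ℂ)) (Icc a b) :=
      Complex.ofRealCLM.contDiff.comp_contDiffOn hu
    exact (hρ.inv fun x hx => (hpos x hx).ne').smul
      (((cast ht).sub ((cast ((hp.sub hq).div_const 2)).mul contDiffOn_const)).mul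
        ((((cast hω.contDiffOn).mul contDiffOn_const).neg.cexp).pow 2))
  have maps : MapsTo ξ.symm (Icc 0 (ξ b)) (Icc a b) := by
    rw [mapsTo_iff_image_subset, ξ.symm.image_Icc, ξ.symm_apply_apply, ← hξa, ξ.symm_apply_apply]
  obtain ⟨k, hk, hk_eq⟩ := exists_contDiff_one_eqOn_Icc (hξa ▸ ξ.strictMono hab)
    (potential.comp hsymm.contDiffOn maps)
  refine ⟨ξ, ω, k, ⟨hpos, hξa, hξ, hsymm, fun x hx => (hω' x).congr_deriv (hv_eq hx), hω,
    fun x hx => ?_, hk⟩, hωa⟩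
  have hξx : ξ x ∈ Icc 0 (ξ b) := hξa ▸ ⟨ξ.monotone hx.1, ξ.monotone hx.2⟩
  rw [hk_eq hξx, Function.comp_apply, ξ.symm_apply_apply, Complex.real_smul, mul_comm,
    Complex.ofReal_inv, mul_inv_cancel_left₀ (Complex.ofReal_ne_zero.2 (hpos x hx).ne')]

end Transform

end DiracExpansion

open DiracExpansion

/-- At the left endpoint `x = a` the symmetric partial sums converge to
`(sin²α F₁(a) - sin α cos α F₂(a), -sin α cos α F₁(a) + cos²α F₂(a))`. -/
theorem dirac_expansion_left_endpoint
    (a b : ℝ) (hab : a < b)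
    (p q t ρ : ℝ → ℝ)
    (hp : ContDiffOn ℝ 1 p (Set.Icc a b)) (hq : ContDiffOn ℝ 1 q (Set.Icc a b))
    (ht : ContDiffOn ℝ 1 t (Set.Icc a b)) (hρ : ContDiffOn ℝ 1 ρ (Set.Icc a b))
    (hρpos : ∀ x ∈ Set.Icc a b, 0 < ρ x)
    (α β : ℝ) (hα : α ∈ Set.Ico 0 (2 * Real.pi)) (hβ : β ∈ Set.Ico 0 (2 * Real.pi))
    -- the listing of all eigenvalues with eigenfunctions
    (lam : ℤ → ℝ) (f g : ℤ → ℝ → ℝ)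
    (heig : ∀ n : ℤ, SatisfiesDiracSystem a b p q t ρ (lam n) (f n) (g n) ∧
      DiracBC a b α β (f n) (g n))
    (hord : ∀ n : ℤ, lam n ≤ lam (n + 1))
    (hgrow : Filter.Tendsto (fun n : ℤ => |lam n|) Filter.cofinite Filter.atTop)
    (hcomplete : ∀ μ : ℝ, IsDiracEigenvalue a b p q t ρ α β μ → ∃ n, lam n = μ)
    (horth : ∀ m n : ℤ,
      (∫ x in a..b, ρ x * (f m x * f n x + g m x * g n x)) = if m = n then 1 else 0)
    -- the expanded function and its expansion coefficients
    (F₁ F₂ : ℝ → ℝ)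
    (hF₁ : ContDiffOn ℝ 1 F₁ (Set.Icc a b)) (hF₂ : ContDiffOn ℝ 1 F₂ (Set.Icc a b))
    (C : ℤ → ℝ)
    (hC : ∀ n, C n = ∫ x in a..b, ρ x * (f n x * F₁ x + g n x * F₂ x)) :
    Filter.Tendsto
      (fun N : ℕ =>
        ((∑ n ∈ Finset.Icc (-(N : ℤ)) (N : ℤ), C n * f n a),
         (∑ n ∈ Finset.Icc (-(N : ℤ)) (N : ℤ), C n * g n a)))
      Filter.atTop
      (nhds (Real.sin α ^ 2 * F₁ a - Real.sin α * Real.cos α * F₂ a,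
             -(Real.sin α * Real.cos α) * F₁ a + Real.cos α ^ 2 * F₂ a)) := by
  have hp' := hp.continuousOn
  have hq' := hq.continuousOn
  have ht' := ht.continuousOn
  have hρ' := hρ.continuousOn
  obtain ⟨ξ, ω, k, transform, rfl⟩ := exists_isLiouvilleTransform hab hp hq ht hρ hρpos α
  set Y : ℤ → ℝ → ℂ := fun n x => ⟨f n x, g n x⟩
  set F : ℝ → ℂ := fun x => ⟨F₁ x, F₂ x⟩
  have hF : ContDiffOn ℝ 1 F (Icc a b) :=
    Complex.equivRealProdCLM.symm.contDiff.comp_contDiffOn (hF₁.prodMk hF₂)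
  have basis := transform.isEigenbasis_transformed (β := β) hab.le (monotone_int_of_le_succ hord)
    (fun n => (satisfiesDiracSystem_re_im_iff (Y := Y n) hp' hq' ht' hρ').1 (heig n).1)
    (fun n => (heig n).2) (fun m n => by simpa only [Y, real_inner_mk_eq] using horth m n)
    fun μ X hX hbc hne => hcomplete μ (hX.isDiracEigenvalue hab.le hp' hq' ht' hρ' hbc hne)
  have limit := transform.tendsto_symmetric_sum hab hF basis
  simp only [Y, real_inner_mk_eq, F, ← hC, im_exp_neg_mul_I_mul_smul] at limit
  simpa only [Function.comp_def, Complex.re_sum, Complex.im_sum, Complex.smul_re,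
    Complex.smul_im, smul_eq_mul] using ((Complex.continuous_re.tendsto _).comp limit).prodMk_nhds
      ((Complex.continuous_im.tendsto _).comp limit)
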